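/- arXiv:1805.09539 — 2 statements merged into one kernel-verified Lean document; each statement's English description precedes it below -/
import Mathlib

section
/- Let $\mathcal{L}$ be a set of pairwise intersecting $k$-subspaces of $\mathrm{PG}(n,q)$ with $n \geq 2k+1$, each pair meeting in at least a point. Then $|\mathcal{L}| \leq \binom{n}{k}_q$, with equality if and only if $\mathcal{L}$ consists of all $k$-subspaces through a fixed point, or $n = 2k+1$ and $\mathcal{L}$ consists of all $k$-subspaces contained in a fixed hyperplane. -/
open Finset
open scoped Classical

/-- The Gaussian binomial coefficient `[a choose b]_q`, defined via the
`q`-Pascal recurrence `[a+1, b+1]_q = [a, b]_q + q^(b+1) * [a, b+1]_q`. -/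
def gbinom (q : ℕ) : ℕ → ℕ → ℕ
  | _, 0 => 1
  | 0, _+1 => 0
  | a+1, b+1 => gbinom q a b + q^(b+1) * gbinom q a (b+1)

namespace EKR

section gb

theorem gb_A_of_B (q : ℕ) (m r : ℕ)
    (hB : (gbinom q m (r+1) : ℝ) * ((q:ℝ)^(r+1) - 1) * (q:ℝ)^r = gbinom q m r * ((q:ℝ)^m - (q:ℝ)^r)) :
    (gbinom q (m+1) (r+1) : ℝ) * ((q:ℝ)^(r+1) - 1) = gbinom q m r * ((q:ℝ)^(m+1) - 1) := by
  simp only [gbinom]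
  push_cast
  linear_combination (q:ℝ) * hB

theorem gb_B (q : ℕ) (hq : 2 ≤ q) (m : ℕ) : ∀ r,
    (gbinom q m (r+1) : ℝ) * ((q:ℝ)^(r+1) - 1) * (q:ℝ)^r = gbinom q m r * ((q:ℝ)^m - (q:ℝ)^r) := by
  have hq' : (1:ℝ) < q := by exact_mod_cast hq
  induction m with
  | zero =>
    intro r
    cases r with
    | zero => simp [gbinom]
    | succ r => simp [gbinom]
  | succ m ih =>
    intro r
    have hA := gb_A_of_B q m r (ih r)
    rw [hA]
    cases r with
    | zero => simp [gbinom]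
    | succ r =>
      have hA' := gb_A_of_B q m r (ih r)
      have h1 : (q:ℝ)^(r+1) - 1 ≠ 0 := by
        have : (1:ℝ) < (q:ℝ)^(r+1) := one_lt_pow₀ hq' (by omega)
        linarith
      apply mul_right_cancel₀ h1
      have h2 := ih r
      linear_combination (-((q:ℝ)^(m+1) - (q:ℝ)^(r+1))) * hA' + (q:ℝ) * ((q:ℝ)^(m+1) - 1) * h2

theorem gb_A (q : ℕ) (hq : 2 ≤ q) (m r : ℕ) :
    (gbinom q (m+1) (r+1) : ℝ) * ((q:ℝ)^(r+1) - 1) = gbinom q m r * ((q:ℝ)^(m+1) - 1) :=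
  gb_A_of_B q m r (gb_B q hq m r)

theorem gb_symm (q : ℕ) (hq : 2 ≤ q) (k : ℕ) :
    gbinom q (2*k+1) (k+1) = gbinom q (2*k+1) k := by
  have hq' : (1:ℝ) < q := by exact_mod_cast hq
  have h := gb_B q hq (2*k+1) k
  have h1 : (q:ℝ)^(k+1) - 1 ≠ 0 := by
    have : (1:ℝ) < (q:ℝ)^(k+1) := one_lt_pow₀ hq' (by omega)
    linarith
  have h2 : (q:ℝ)^k ≠ 0 := by positivity
  have : (gbinom q (2*k+1) (k+1) : ℝ) = gbinom q (2*k+1) k := by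
    apply mul_right_cancel₀ (mul_ne_zero h1 h2)
    linear_combination h
  exact_mod_cast this

end gb

section count

variable {F V : Type} [Field F] [Fintype F] [AddCommGroup V] [Module F V] [Fintype V]

theorem card_sub (S : Submodule F V) :
    (∑ v : V, if v ∈ S then (1:ℝ) else 0) = (Fintype.card F : ℝ) ^ (Module.finrank F S) := by
  have h := Module.card_eq_pow_finrank (K := F) (V := S)
  rw [Finset.sum_boole]
  rw [← Nat.cast_pow, ← h, Fintype.card_subtype]

theorem card_diff (S H : Submodule F V) (h : S ≤ H) :
    (∑ v : V, if (v ∈ H ∧ v ∉ S) then (1:ℝ) else 0) =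
      (Fintype.card F : ℝ) ^ (Module.finrank F H) - (Fintype.card F : ℝ) ^ (Module.finrank F S) := by
  rw [← card_sub, ← card_sub, ← Finset.sum_sub_distrib]
  refine Finset.sum_congr rfl fun v _ => ?_
  by_cases h1 : v ∈ S
  · simp [h1, h h1]
  · simp [h1]

theorem finrank_sup_span (S : Submodule F V) (v : V) (hv : v ∉ S) :
    Module.finrank F (S ⊔ Submodule.span F {v} : Submodule F V) = Module.finrank F S + 1 := by
  have hv0 : v ≠ 0 := fun h => hv (h ▸ S.zero_mem)
  have h := Submodule.finrank_sup_add_finrank_inf_eq S (Submodule.span F {v})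
  have h2 : S ⊓ Submodule.span F {v} = ⊥ := by
    rw [← disjoint_iff, Submodule.disjoint_span_singleton' hv0]
    exact hv
  rw [h2, finrank_bot, finrank_span_singleton hv0] at h
  omega

variable {d : ℕ} [Fintype {W : Submodule F V // Module.finrank F W = d}]

theorem count_step (T H A : Submodule F V) (hTH : T ≤ H) (hAH : A ≤ H) (hTA : T ⊓ A = ⊥)
    (c : ℝ)
    (hc : ∀ v ∈ H, v ∉ T ⊔ A →
      (∑ W : {W : Submodule F V // Module.finrank F W = d},
        if (T ⊔ Submodule.span F {v} ≤ W.1 ∧ W.1 ≤ H ∧ W.1 ⊓ A = ⊥) then (1:ℝ) else 0) = c) :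
    (∑ W : {W : Submodule F V // Module.finrank F W = d},
        if (T ≤ W.1 ∧ W.1 ≤ H ∧ W.1 ⊓ A = ⊥) then (1:ℝ) else 0) *
      ((Fintype.card F : ℝ) ^ d - (Fintype.card F : ℝ) ^ (Module.finrank F T)) =
    ((Fintype.card F : ℝ) ^ (Module.finrank F H) -
      (Fintype.card F : ℝ) ^ (Module.finrank F T + Module.finrank F A)) * c := by
  have e1 : (∑ W : {W : Submodule F V // Module.finrank F W = d},
        if (T ≤ W.1 ∧ W.1 ≤ H ∧ W.1 ⊓ A = ⊥) then (1:ℝ) else 0) *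
      ((Fintype.card F : ℝ) ^ d - (Fintype.card F : ℝ) ^ (Module.finrank F T)) =
      ∑ W : {W : Submodule F V // Module.finrank F W = d}, ∑ v : V,
        if (T ≤ W.1 ∧ W.1 ≤ H ∧ W.1 ⊓ A = ⊥) ∧ (v ∈ W.1 ∧ v ∉ T) then (1:ℝ) else 0 := by
    rw [Finset.sum_mul]
    refine Finset.sum_congr rfl fun W _ => ?_
    by_cases hW : (T ≤ W.1 ∧ W.1 ≤ H ∧ W.1 ⊓ A = ⊥)
    · simp only [hW, true_and, if_true, and_self, one_mul]
      rw [card_diff T W.1 hW.1, W.2]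
    · simp only [hW, false_and, if_false, zero_mul, Finset.sum_const_zero]
  have hs : Module.finrank F (T ⊔ A : Submodule F V) = Module.finrank F T + Module.finrank F A := by
    have h := Submodule.finrank_sup_add_finrank_inf_eq T A
    rw [hTA, finrank_bot] at h
    omega
  rw [e1, Finset.sum_comm, ← hs, ← card_diff (T ⊔ A) H (sup_le hTH hAH), Finset.sum_mul]
  refine Finset.sum_congr rfl fun v _ => ?_
  by_cases hv : v ∈ H ∧ v ∉ T ⊔ A
  · rw [if_pos hv, one_mul, ← hc v hv.1 hv.2]
    refine Finset.sum_congr rfl fun W _ => ?_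
    congr 1
    simp only [eq_iff_iff, sup_le_iff, Submodule.span_singleton_le_iff_mem]
    have : v ∉ T := fun h => hv.2 (Submodule.mem_sup_left h)
    tauto
  · rw [if_neg hv, zero_mul]
    refine Finset.sum_eq_zero fun W _ => ?_
    rw [if_neg]
    rintro ⟨⟨h1, h2, h3⟩, h4, h5⟩
    apply hv
    refine ⟨h2 h4, fun h6 => h5 ?_⟩
    obtain ⟨t, ht, a, ha, rfl⟩ := Submodule.mem_sup.1 h6
    have : a ∈ W.1 ⊓ A := ⟨by simpa using W.1.sub_mem h4 (h1 ht), ha⟩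
    rw [h3, Submodule.mem_bot] at this
    simpa [this] using ht

/-- number of `d`-spaces over a `j`-space inside an `h`-space missing an `a`-space -/
noncomputable def cc (q : ℝ) (h a d j : ℕ) : ℝ :=
  ∏ i ∈ Finset.Ico j d, (q^h - q^(i+a)) / (q^d - q^i)

theorem cc_step (q : ℝ) (hq : 1 < q) (h a d j : ℕ) (hj : j < d) :
    cc q h a d j * (q^d - q^j) = (q^h - q^(j+a)) * cc q h a d (j+1) := by
  unfold cc
  rw [Finset.prod_eq_prod_Ico_succ_bot hj]
  have : q^d - q^j ≠ 0 := by
    have : q^j < q^d := pow_lt_pow_right₀ hq hj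
    linarith
  field_simp

theorem count (H A : Submodule F V) (hAH : A ≤ H) (m : ℕ) : ∀ T : Submodule F V,
    T ≤ H → T ⊓ A = ⊥ → Module.finrank F T + m = d →
    (∑ W : {W : Submodule F V // Module.finrank F W = d},
        if (T ≤ W.1 ∧ W.1 ≤ H ∧ W.1 ⊓ A = ⊥) then (1:ℝ) else 0) =
      cc (Fintype.card F) (Module.finrank F H) (Module.finrank F A) d (Module.finrank F T) := by
  have hq : (1:ℝ) < Fintype.card F := by exact_mod_cast Fintype.one_lt_card
  induction m with
  | zero =>
    intro T hTH hTA hT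
    rw [add_zero] at hT
    rw [hT]
    simp only [cc, Finset.Ico_self, Finset.prod_empty]
    rw [Finset.sum_eq_single (⟨T, hT⟩ : {W : Submodule F V // Module.finrank F W = d})]
    · simp [hTH, hTA]
    · rintro W - hW
      rw [if_neg]
      rintro ⟨h1, -⟩
      apply hW
      apply Subtype.ext
      exact (Submodule.eq_of_le_of_finrank_eq h1 (by rw [hT, W.2])).symm
    · simp
  | succ m ih =>
    intro T hTH hTA hT
    have hj : Module.finrank F T < d := by omega
    have key := count_step (d := d) T H A hTH hAH hTA
      (cc (Fintype.card F) (Module.finrank F H) (Module.finrank F A) d (Module.finrank F T + 1)) (by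
        intro v hv hvT
        have hvT' : v ∉ T := fun h => hvT (Submodule.mem_sup_left h)
        have hf := finrank_sup_span T v hvT'
        rw [← hf]
        apply ih
        · exact sup_le hTH (by simpa using hv)
        · rw [eq_bot_iff]
          rintro x ⟨hx1, hx2⟩
          obtain ⟨t, ht, y, hy, rfl⟩ := Submodule.mem_sup.1 hx1
          obtain ⟨r, rfl⟩ := Submodule.mem_span_singleton.1 hy
          by_cases hr : r = 0
          · subst hr
            have : t ∈ T ⊓ A := ⟨ht, by simpa using hx2⟩
            rw [hTA] at this
            simpa using this
          · exfalso
            apply hvT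
            have : v = r⁻¹ • (-t + (t + r • v)) := by
              rw [neg_add_cancel_left, smul_smul, inv_mul_cancel₀ hr, one_smul]
            rw [this]
            exact Submodule.smul_mem _ _ (Submodule.add_mem _
              (Submodule.mem_sup_left (T.neg_mem ht)) (Submodule.mem_sup_right hx2))
        · omega)
    rw [← cc_step _ hq _ _ _ _ hj] at key
    have hne : (Fintype.card F : ℝ) ^ d - (Fintype.card F : ℝ) ^ (Module.finrank F T) ≠ 0 := by
      have := pow_lt_pow_right₀ hq hj
      linarith
    exact mul_right_cancel₀ hne key

theorem cc_gb (q : ℕ) (hq : 2 ≤ q) (h : ℕ) (m : ℕ) : ∀ j, j ≤ h →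
    cc q h 0 (j+m) j = gbinom q (h-j) m := by
  have hq' : (1:ℝ) < q := by exact_mod_cast hq
  induction m with
  | zero => intro j hj; simp [cc, gbinom]
  | succ m ih =>
    intro j hj
    have h1 := cc_step q hq' h 0 (j+(m+1)) j (by omega)
    have hne : (q:ℝ)^(j+(m+1)) - (q:ℝ)^j ≠ 0 := by
      have := pow_lt_pow_right₀ hq' (show j < j+(m+1) by omega)
      linarith
    apply mul_right_cancel₀ hne
    rw [h1]
    rcases hj.eq_or_lt with rfl | hj
    · simp [gbinom]
    · obtain ⟨e, rfl⟩ : ∃ e, h = j + 1 + e := ⟨h - (j+1), by omega⟩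
      have h2 := ih (j+1) (by omega)
      rw [show j + 1 + m = j + (m+1) by ring] at h2
      rw [h2]
      rw [show j + 1 + e - j = e + 1 by omega, show j + 1 + e - (j+1) = e by omega]
      have h3 := gb_A q hq e m
      simp only [add_zero]
      linear_combination -(q:ℝ)^j * h3

end count
section spec
open scoped InnerProductSpace

variable {E : Type} [NormedAddCommGroup E] [InnerProductSpace ℝ E] [FiniteDimensional ℝ E]

theorem spec_aux (T : E →ₗ[ℝ] E) (hT : T.IsSymmetric) (P Q : Submodule ℝ E) (l : ℝ)

    (hP : ∀ x ∈ P, T x ∈ P) (hQ : ∀ x ∈ Q, T x - l • x ∈ P) (h : E) (hh : h ∈ Q)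
    (ho : ∀ x ∈ P, ⟪x, h⟫_ℝ = 0) : T h = l • h := by
  have h1 := hQ h hh
  have h2 : ⟪T h - l • h, T h - l • h⟫_ℝ = 0 := by
    rw [inner_sub_right, inner_smul_right, ho _ h1, ← hT, ho _ (hP _ h1)]
    simp
  have := inner_self_eq_zero.1 h2
  exact sub_eq_zero.1 this

theorem spec (T : E →ₗ[ℝ] E) (hT : T.IsSymmetric) (U : ℕ → Submodule ℝ E) (hU : Monotone U)
    (l : ℕ → ℝ) (d : ℕ) (hinv : ∀ j ≤ d, ∀ x ∈ U j, T x ∈ U j)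
    (hl : ∀ j < d, ∀ x ∈ U (j+1), T x - l (j+1) • x ∈ U j)
    (hlt : ∀ j, 2 ≤ j → j ≤ d → l 1 < l j) (j : ℕ) (hj : j + 1 ≤ d) :
    ∀ f ∈ U (j+1), (∀ x ∈ U 0, ⟪x, f⟫_ℝ = 0) →
      l 1 * ⟪f, f⟫_ℝ ≤ ⟪T f, f⟫_ℝ ∧ (⟪T f, f⟫_ℝ = l 1 * ⟪f, f⟫_ℝ → f ∈ U 1) := by
  induction j with
  | zero =>
    intro f hf ho
    have := spec_aux T hT (U 0) (U 1) (l 1) (hinv 0 (by omega)) (hl 0 (by omega)) f hf ho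
    rw [this, inner_smul_left]
    exact ⟨le_of_eq (by simp), fun _ => hf⟩
  | succ j ih =>
    intro f hf ho
    obtain ⟨g, hg, h, hh, rfl⟩ := (U (j+1)).exists_add_mem_mem_orthogonal f
    rw [Submodule.mem_orthogonal] at hh
    have hle : U (j+1) ≤ U (j+1+1) := hU (by omega)
    have hhU : h ∈ U (j+1+1) := by
      have := (U (j+1+1)).sub_mem hf (hle hg)
      simpa using this
    have hTh := spec_aux T hT (U (j+1)) (U (j+1+1)) (l (j+1+1)) (hinv _ (by omega))
      (hl _ (by omega)) h hhU hh
    have h0 : U 0 ≤ U (j+1) := hU (by omega)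
    have hog : ∀ x ∈ U 0, ⟪x, g⟫_ℝ = 0 := by
      intro x hx
      have := ho x hx
      rwa [inner_add_right, hh x (h0 hx), add_zero] at this
    obtain ⟨i1, i2⟩ := ih (by omega) g hg hog
    have e1 : ⟪g, h⟫_ℝ = 0 := hh g hg
    have e2 : ⟪h, g⟫_ℝ = 0 := by rw [real_inner_comm]; exact e1
    have e3 : ⟪T g, h⟫_ℝ = 0 := hh _ (hinv _ (by omega) g hg)
    have e4 : ⟪T (g + h), g + h⟫_ℝ = ⟪T g, g⟫_ℝ + l (j+1+1) * ⟪h, h⟫_ℝ := by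
      rw [map_add, hTh, inner_add_left, inner_add_right, inner_add_right, e3, inner_smul_left,
        inner_smul_left, e2]
      simp
    have e5 : ⟪g + h, g + h⟫_ℝ = ⟪g, g⟫_ℝ + ⟪h, h⟫_ℝ := by
      rw [inner_add_left, inner_add_right, inner_add_right, e1, e2]
      simp
    have hl' := hlt (j+1+1) (by omega) (by omega)
    have hpos : 0 ≤ ⟪h, h⟫_ℝ := real_inner_self_nonneg
    rw [e4, e5]
    constructor
    · nlinarith
    · intro heq
      have hz : ⟪h, h⟫_ℝ = 0 := by
        by_contra hne
        have : 0 < ⟪h, h⟫_ℝ := lt_of_le_of_ne hpos (Ne.symm hne)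
        nlinarith
      have hz' : h = 0 := inner_self_eq_zero.1 hz
      subst hz'
      rw [add_zero]
      apply i2
      rw [hz] at heq
      linarith

end spec
section op
open scoped InnerProductSpace

variable {F V : Type} [Field F] [Fintype F] [AddCommGroup V] [Module F V] [Fintype V]

theorem exists_between (S : Submodule F V) (m : ℕ) : ∀ T : Submodule F V, S ≤ T →
    Module.finrank F S + m ≤ Module.finrank F T →
    ∃ R, S ≤ R ∧ R ≤ T ∧ Module.finrank F R = Module.finrank F S + m := by
  induction m with
  | zero => intro T h _; exact ⟨S, le_rfl, h, rfl⟩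
  | succ m ih =>
    intro T h hm
    obtain ⟨R, h1, h2, h3⟩ := ih T h (by omega)
    have : ¬ T ≤ R := fun hTR => by
      have := Submodule.finrank_mono hTR
      omega
    obtain ⟨v, hv, hvR⟩ := SetLike.not_le_iff_exists.1 this
    refine ⟨R ⊔ Submodule.span F {v}, le_sup_of_le_left h1, sup_le h2 (by simpa using hv), ?_⟩
    rw [finrank_sup_span R v hvR, h3]
    omega

variable {d : ℕ}

variable (d) in
/-- indicator of `d`-spaces above `T` -/
noncomputable def phi (T : Submodule F V) :
    EuclideanSpace ℝ {W : Submodule F V // Module.finrank F W = d} :=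
  WithLp.toLp 2 (fun W => if T ≤ W.1 then (1:ℝ) else 0)

variable (d) in
/-- indicator of `d`-spaces meeting `T` exactly in `S` -/
noncomputable def psi (S T : Submodule F V) :
    EuclideanSpace ℝ {W : Submodule F V // Module.finrank F W = d} :=
  WithLp.toLp 2 (fun W => if T ⊓ W.1 = S then (1:ℝ) else 0)

variable (F V d) in
/-- the filtration -/
noncomputable def Ul (t : ℕ) :
    Submodule ℝ (EuclideanSpace ℝ {W : Submodule F V // Module.finrank F W = d}) :=
  Submodule.span ℝ {f | ∃ T : Submodule F V, Module.finrank F T < t ∧ f = phi d T}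

theorem Ul_mono : Monotone (Ul F V d) := by
  intro a b hab
  apply Submodule.span_mono
  rintro f ⟨T, hT, rfl⟩
  exact ⟨T, by omega, rfl⟩

theorem phi_mem (T : Submodule F V) (t : ℕ) (h : Module.finrank F T < t) : phi d T ∈ Ul F V d t :=
  Submodule.subset_span ⟨T, h, rfl⟩

/-- Moebius coefficient -/
noncomputable def mu (q : ℝ) (i : ℕ) : ℝ := (-1)^i * ∏ m ∈ Finset.range i, q^m

theorem psi_ident (S T T' : Submodule F V) (hST : S ≤ T') (hTT : T' ≤ T)
    (ht : Module.finrank F T = Module.finrank F T' + 1) :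
    ((Fintype.card F : ℝ) ^ (Module.finrank F S + 1) - (Fintype.card F : ℝ) ^ (Module.finrank F S)) •
      (psi d S T' - psi d S T) =
    ∑ v : V, if (v ∈ T ∧ v ∉ T') then psi d (S ⊔ Submodule.span F {v}) T else 0 := by
  ext W
  have hL : (∑ v : V, if (v ∈ T ∧ v ∉ T') then psi d (S ⊔ Submodule.span F {v}) T else 0) W
      = ∑ v : V, if (v ∈ T ∧ v ∉ T') ∧ T ⊓ W.1 = S ⊔ Submodule.span F {v} then (1:ℝ) else 0 := by
    rw [WithLp.ofLp_sum, Finset.sum_apply]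
    refine Finset.sum_congr rfl fun v _ => ?_
    by_cases h : v ∈ T ∧ v ∉ T'
    · simp [h, psi]
    · simp [h]
  rw [hL]
  simp only [psi, PiLp.smul_apply, PiLp.sub_apply, smul_eq_mul]
  by_cases h1 : T' ⊓ W.1 = S
  · by_cases h2 : T ⊓ W.1 = S
    · rw [if_pos h1, if_pos h2, sub_self, mul_zero, Finset.sum_eq_zero]
      intro v _
      rw [if_neg]
      rintro ⟨⟨hv, hv'⟩, h3⟩
      apply hv'
      apply hST
      rw [← h2, h3]
      exact Submodule.mem_sup_right (Submodule.mem_span_singleton_self v)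
    · rw [if_pos h1, if_neg h2, sub_zero, mul_one]
      have hSR : S ≤ T ⊓ W.1 := by rw [← h1]; exact inf_le_inf_right _ hTT
      have hlt : S < T ⊓ W.1 := lt_of_le_of_ne hSR (Ne.symm h2)
      have hR : Module.finrank F (T ⊓ W.1 : Submodule F V) = Module.finrank F S + 1 := by
        have a1 := Submodule.finrank_lt_finrank_of_lt hlt
        have a2 := Submodule.finrank_sup_add_finrank_inf_eq T' (T ⊓ W.1)
        have a3 : T' ⊓ (T ⊓ W.1) = S := by rw [← inf_assoc, inf_eq_left.2 hTT, h1]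
        rw [a3] at a2
        have a4 : Module.finrank F (T' ⊔ T ⊓ W.1 : Submodule F V) ≤ Module.finrank F T :=
          Submodule.finrank_mono (sup_le hTT inf_le_left)
        omega
      rw [← hR, ← card_diff S _ hSR]
      refine Finset.sum_congr rfl fun v _ => ?_
      congr 1
      rw [eq_iff_iff]
      constructor
      · rintro ⟨hv, hvS⟩
        refine ⟨⟨hv.1, fun hvT => hvS ?_⟩, ?_⟩
        · rw [← h1]; exact ⟨hvT, hv.2⟩
        · symm
          apply Submodule.eq_of_le_of_finrank_eq
          · exact sup_le hSR (by simpa using hv)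
          · rw [hR, finrank_sup_span S v hvS]
      · rintro ⟨⟨hv, hv'⟩, h3⟩
        refine ⟨?_, fun h => hv' (hST h)⟩
        rw [h3]
        exact Submodule.mem_sup_right (Submodule.mem_span_singleton_self v)
  · have h2 : T ⊓ W.1 ≠ S := by
      intro h
      apply h1
      have : T' ⊓ W.1 = T' ⊓ (T ⊓ W.1) := by rw [← inf_assoc, inf_eq_left.2 hTT]
      rw [this, h, inf_eq_right.2 hST]
    rw [if_neg h1, if_neg h2, sub_self, mul_zero, Finset.sum_eq_zero]
    intro v _
    rw [if_neg]
    rintro ⟨⟨hv, hv'⟩, h3⟩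
    apply h1
    have : T' ⊓ W.1 = T' ⊓ (T ⊓ W.1) := by rw [← inf_assoc, inf_eq_left.2 hTT]
    rw [this, h3, inf_comm, sup_inf_assoc_of_le _ hST]
    have hv0 : v ≠ 0 := fun h => hv' (h ▸ T'.zero_mem)
    have : Submodule.span F {v} ⊓ T' = ⊥ := by
      rw [inf_comm, ← disjoint_iff, Submodule.disjoint_span_singleton' hv0]
      exact hv'
    rw [this, sup_bot_eq]

theorem mob (i : ℕ) : ∀ S T : Submodule F V, S ≤ T → Module.finrank F T = Module.finrank F S + i →
    psi d S T - mu (Fintype.card F) i • phi d T ∈ Ul F V d (Module.finrank F T) := by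
  have hq : (1:ℝ) < Fintype.card F := by exact_mod_cast Fintype.one_lt_card
  induction i with
  | zero =>
    intro S T h1 h2
    have : S = T := Submodule.eq_of_le_of_finrank_eq h1 (by omega)
    subst this
    have : psi d S S = phi d S := by
      simp [psi, phi]
    rw [this]
    simp [mu]
  | succ i ih =>
    intro S T h1 h2
    obtain ⟨T', hS', hT', hf⟩ := exists_between S i T h1 (by omega)
    have hid := psi_ident (d := d) S T T' hS' hT' (by omega)
    set q : ℝ := (Fintype.card F : ℝ) with hqd
    set s := Module.finrank F S with hs
    have hne : q ^ (s+1) - q ^ s ≠ 0 := by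
      have := pow_lt_pow_right₀ hq (show s < s + 1 by omega)
      linarith
    have m1 : psi d S T' ∈ Ul F V d (Module.finrank F T) := by
      have a := ih S T' hS' hf
      have b : Ul F V d (Module.finrank F T') ≤ Ul F V d (Module.finrank F T) := Ul_mono (by omega)
      have := (Ul F V d (Module.finrank F T)).add_mem (b a)
        ((Ul F V d (Module.finrank F T)).smul_mem (mu q i)
          (phi_mem (d := d) T' (Module.finrank F T) (by omega)))
      simpa using this
    have m2 : (∑ v : V, if (v ∈ T ∧ v ∉ T') then
        (psi d (S ⊔ Submodule.span F {v}) T - mu q i • phi d T) else 0) ∈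
        Ul F V d (Module.finrank F T) := by
      apply Submodule.sum_mem
      intro v _
      split_ifs with hv
      · apply ih
        · exact sup_le h1 (by simpa using hv.1)
        · rw [finrank_sup_span S v (fun h => hv.2 (hS' h))]
          omega
      · exact Submodule.zero_mem _
    have m3 : (∑ v : V, if (v ∈ T ∧ v ∉ T') then
        (psi d (S ⊔ Submodule.span F {v}) T - mu q i • phi d T) else 0) =
        (q^(s+1) - q^s) • (psi d S T' - psi d S T) -
          ((q^(s+i+1) - q^(s+i)) * mu q i) • phi d T := by
      rw [hid, show s + i + 1 = Module.finrank F T by omega, ← hf, ← card_diff T' T hT',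
        mul_smul, Finset.sum_smul, ← Finset.sum_sub_distrib]
      refine Finset.sum_congr rfl fun v _ => ?_
      split_ifs <;> simp
    rw [m3] at m2
    have m4 := (Ul F V d (Module.finrank F T)).sub_mem m1
      ((Ul F V d (Module.finrank F T)).smul_mem (q^(s+1) - q^s)⁻¹ m2)
    convert m4 using 1
    rw [smul_sub, smul_smul, smul_smul, inv_mul_cancel₀ hne, one_smul]
    have : mu q (i+1) = - ((q^(s+1) - q^s)⁻¹ * ((q^(s+i+1) - q^(s+i)) * mu q i)) := by
      unfold mu
      rw [Finset.prod_range_succ]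
      field_simp
      ring
    rw [this, neg_smul]
    abel

variable [Fintype {W : Submodule F V // Module.finrank F W = d}]

variable (F V d) in
/-- the q-Kneser operator -/
noncomputable def Kop : EuclideanSpace ℝ {W : Submodule F V // Module.finrank F W = d} →ₗ[ℝ]
    EuclideanSpace ℝ {W : Submodule F V // Module.finrank F W = d} where
  toFun f := WithLp.toLp 2 (fun W => ∑ W', if W'.1 ⊓ W.1 = ⊥ then f W' else 0)
  map_add' f g := by
    ext W
    simp only [PiLp.add_apply]
    rw [← Finset.sum_add_distrib]
    refine Finset.sum_congr rfl fun v _ => ?_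
    split_ifs <;> simp
  map_smul' c f := by
    ext W
    simp only [PiLp.smul_apply, RingHom.id_apply, smul_eq_mul]
    rw [Finset.mul_sum]
    refine Finset.sum_congr rfl fun v _ => ?_
    split_ifs <;> simp

theorem Kop_apply (f : EuclideanSpace ℝ {W : Submodule F V // Module.finrank F W = d}) (W) :
    Kop F V d f W = ∑ W', if W'.1 ⊓ W.1 = ⊥ then f W' else 0 := rfl

theorem Kop_symm : (Kop F V d).IsSymmetric := by
  intro f g
  simp only [PiLp.inner_apply, Kop_apply, RCLike.inner_apply, conj_trivial]
  simp only [Finset.mul_sum, Finset.sum_mul]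
  rw [Finset.sum_comm]
  refine Finset.sum_congr rfl fun W _ => ?_
  refine Finset.sum_congr rfl fun W' _ => ?_
  rw [inf_comm]
  split_ifs <;> simp

theorem Kop_phi (T : Submodule F V) (hT : Module.finrank F T ≤ d) :
    Kop F V d (phi d T) =
      cc (Fintype.card F) (Module.finrank F V) d d (Module.finrank F T) • psi d ⊥ T := by
  ext W
  rw [Kop_apply]
  simp only [psi, phi, PiLp.smul_apply, smul_eq_mul]
  by_cases h : T ⊓ W.1 = ⊥
  · have := count (d := d) ⊤ W.1 le_top (d - Module.finrank F T) T le_top h (by omega)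
    rw [finrank_top, W.2] at this
    rw [if_pos h, mul_one, ← this]
    refine Finset.sum_congr rfl fun W' _ => ?_
    by_cases h1 : T ≤ W'.1 <;> by_cases h2 : W'.1 ⊓ W.1 = ⊥ <;> simp [h1, h2]
  · rw [if_neg h, mul_zero]
    refine Finset.sum_eq_zero fun W' _ => ?_
    split_ifs with h1 h2
    · exfalso
      apply h
      rw [eq_bot_iff, ← h1]
      exact inf_le_inf_right _ h2
    · rfl
    · rfl

theorem Kop_phi_sub (T : Submodule F V) (hT : Module.finrank F T ≤ d) :
    Kop F V d (phi d T) -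
      (mu (Fintype.card F) (Module.finrank F T) *
        cc (Fintype.card F) (Module.finrank F V) d d (Module.finrank F T)) • phi d T ∈
      Ul F V d (Module.finrank F T) := by
  have h := mob (d := d) (Module.finrank F T) ⊥ T bot_le (by simp)
  have h2 := (Ul F V d (Module.finrank F T)).smul_mem
    (cc (Fintype.card F) (Module.finrank F V) d d (Module.finrank F T)) h
  rw [Kop_phi T hT]
  convert h2 using 1
  rw [smul_sub, smul_smul, mul_comm]

theorem Kop_inv (t : ℕ) (ht : t ≤ d + 1) : ∀ f ∈ Ul F V d t, Kop F V d f ∈ Ul F V d t := by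
  intro f hf
  induction hf using Submodule.span_induction with
  | mem f hf =>
    obtain ⟨T, hT, rfl⟩ := hf
    have h := Kop_phi_sub (d := d) T (by omega)
    have h1 : Ul F V d (Module.finrank F T) ≤ Ul F V d t := Ul_mono (by omega)
    have := (Ul F V d t).add_mem (h1 h) ((Ul F V d t).smul_mem
      (mu (Fintype.card F) (Module.finrank F T) *
        cc (Fintype.card F) (Module.finrank F V) d d (Module.finrank F T)) (phi_mem (d := d) T t hT))
    simpa using this
  | zero => simp
  | add f g _ _ h1 h2 => rw [map_add]; exact Submodule.add_mem _ h1 h2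
  | smul c f _ h => rw [map_smul]; exact Submodule.smul_mem _ _ h

theorem Kop_sub (j : ℕ) (hj : j ≤ d) : ∀ f ∈ Ul F V d (j+1), Kop F V d f -
      (mu (Fintype.card F) j * cc (Fintype.card F) (Module.finrank F V) d d j) • f ∈ Ul F V d j := by
  intro f hf
  induction hf using Submodule.span_induction with
  | mem f hf =>
    obtain ⟨T, hT, rfl⟩ := hf
    rcases Nat.lt_succ_iff_lt_or_eq.1 hT with h | h
    · exact Submodule.sub_mem _ (Kop_inv j (by omega) _ (phi_mem T j h))
        (Submodule.smul_mem _ _ (phi_mem T j h))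
    · subst h
      exact Kop_phi_sub T hj
  | zero => simp
  | add f g _ _ h1 h2 =>
    convert Submodule.add_mem _ h1 h2 using 1
    rw [map_add, smul_add]; abel
  | smul c f _ h =>
    convert Submodule.smul_mem _ c h using 1
    rw [map_smul, smul_sub, smul_comm]

theorem Ul_top : Ul F V d (d+1) = ⊤ := by
  rw [eq_top_iff]
  rintro f -
  have : f = ∑ W, f W • phi d W.1 := by
    ext W
    rw [WithLp.ofLp_sum, Finset.sum_apply, Finset.sum_eq_single W]
    · simp [phi]
    · intro W' _ hW
      have : ¬ W'.1 ≤ W.1 := fun h => hW (Subtype.ext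
        (Submodule.eq_of_le_of_finrank_eq h (by rw [W.2, W'.2])))
      have h0 : phi d W'.1 W = 0 := if_neg this
      simp [h0]
    · simp
  rw [this]
  exact Submodule.sum_mem _ fun W _ => Submodule.smul_mem _ _ (phi_mem _ _ (by rw [W.2]; omega))

end op
section hof
open scoped InnerProductSpace

theorem cc_pos (q : ℝ) (hq : 1 < q) (h a d j : ℕ) (hh : a + d ≤ h) : 0 < cc q h a d j := by
  unfold cc
  apply Finset.prod_pos
  intro i hi
  rw [Finset.mem_Ico] at hi
  have h1 : q^i < q^d := pow_lt_pow_right₀ hq hi.2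
  have h2 : q^(i+a) < q^h := pow_lt_pow_right₀ hq (by omega)
  exact div_pos (by linarith) (by linarith)

theorem ev_lt (q : ℝ) (hq : 1 < q) (N d : ℕ) (hN : 2 * d ≤ N) (j : ℕ) (hj : 1 ≤ j) : j + 1 ≤ d →
    (∏ m ∈ Finset.range (j+1), q^m) * cc q N d d (j+1) < cc q N d d 1 := by
  have step : ∀ j, j < d → (∏ m ∈ Finset.range (j+1), q^m) * cc q N d d (j+1) <
      (∏ m ∈ Finset.range j, q^m) * cc q N d d j := by
    intro j hj
    rw [Finset.prod_range_succ, mul_assoc]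
    have hp : 0 < ∏ m ∈ Finset.range j, q^m := Finset.prod_pos fun i _ => by positivity
    apply mul_lt_mul_of_pos_left _ hp
    have hs := cc_step q hq N d d j hj
    have hc := cc_pos q hq N d d (j+1) (by omega)
    have h1 : q^j < q^d := pow_lt_pow_right₀ hq hj
    have h2 : q^d * q^d ≤ q^N := by
      rw [← pow_add]
      exact pow_le_pow_right₀ hq.le (by omega)
    rw [pow_add] at hs
    have h3 : 0 < q^d - q^j := by linarith
    apply lt_of_mul_lt_mul_right _ h3.le
    rw [hs]
    have h4 : q^j * (q^d - q^j) < q^N - q^j * q^d := by nlinarith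
    calc q ^ j * cc q N d d (j + 1) * (q ^ d - q ^ j)
        = (q^j * (q^d - q^j)) * cc q N d d (j+1) := by ring
      _ < _ := mul_lt_mul_of_pos_right h4 hc
  induction j, hj using Nat.le_induction with
  | base =>
    intro h
    have := step 1 (by omega)
    simpa using this
  | succ j hj ih =>
    intro h
    exact (step (j+1) (by omega)).trans (ih (by omega))

variable {F V : Type} [Field F] [Fintype F] [AddCommGroup V] [Module F V] [Fintype V]
variable {d : ℕ} [Fintype {W : Submodule F V // Module.finrank F W = d}]

/-- characteristic vector -/
noncomputable def chi (L : Finset {W : Submodule F V // Module.finrank F W = d}) :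
    EuclideanSpace ℝ {W : Submodule F V // Module.finrank F W = d} :=
  WithLp.toLp 2 (fun W => if W ∈ L then (1:ℝ) else 0)

theorem hoffman (hd : 1 ≤ d) (hN : 2 * d ≤ Module.finrank F V)
    (L : Finset {W : Submodule F V // Module.finrank F W = d})
    (hint : ∀ W ∈ L, ∀ W' ∈ L, W.1 ⊓ W'.1 ≠ ⊥) :
    (L.card : ℝ) ≤ cc (Fintype.card F) (Module.finrank F V) 0 d 1 ∧
    ((L.card : ℝ) = cc (Fintype.card F) (Module.finrank F V) 0 d 1 → chi L ∈ Ul F V d 2) := by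
  have hq : (1:ℝ) < Fintype.card F := by exact_mod_cast Fintype.one_lt_card
  have hX : (Fintype.card {W : Submodule F V // Module.finrank F W = d} : ℝ) =
      cc (Fintype.card F) (Module.finrank F V) 0 d 0 := by
    have := count (F := F) (V := V) (d := d) ⊤ ⊥ bot_le d ⊥ bot_le (by simp) (by simp)
    simpa using this
  set q : ℝ := (Fintype.card F : ℝ)
  set N := Module.finrank F V
  have s0 := cc_step q hq N 0 d 0 (by omega)
  have s1 := cc_step q hq N d d 0 (by omega)
  have p1 := cc_pos q hq N 0 d 1 (by omega)
  have p2 := cc_pos q hq N d d 1 (by omega)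
  have p3 := cc_pos q hq N 0 d 0 (by omega)
  simp only [pow_zero, zero_add] at s0 s1
  set a0 := cc q N 0 d 0
  set a1 := cc q N 0 d 1
  set c0 := cc q N d d 0 with hc0
  set c1 := cc q N d d 1
  have hqd : 1 < q^d := one_lt_pow₀ hq (by omega)
  have hqN : q^d < q^N := pow_lt_pow_right₀ hq (by omega)
  set one := phi (F := F) (V := V) d ⊥ with hone
  have hone_apply : ∀ W, one W = 1 := fun W => if_pos bot_le
  have K1 : Kop F V d one = c0 • one := by
    rw [hone, Kop_phi ⊥ (by simp), finrank_bot]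
    congr 1
    simp [psi, phi]
  have i11 : ⟪one, one⟫_ℝ = a0 := by
    simp only [PiLp.inner_apply, hone_apply]
    simp [← hX]
  have i1c : ⟪one, chi L⟫_ℝ = L.card := by
    simp only [PiLp.inner_apply, hone_apply, chi]
    simp
  have icc : ⟪chi L, chi L⟫_ℝ = L.card := by
    simp only [PiLp.inner_apply, chi]
    simp
  have iKcc : ⟪Kop F V d (chi L), chi L⟫_ℝ = 0 := by
    simp only [PiLp.inner_apply, Kop_apply, chi]
    refine Finset.sum_eq_zero fun W _ => ?_
    by_cases hW : W ∈ L
    · have : (∑ W' : {W : Submodule F V // Module.finrank F W = d},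
          if W'.1 ⊓ W.1 = ⊥ then (if W' ∈ L then (1:ℝ) else 0) else 0) = 0 := by
        refine Finset.sum_eq_zero fun W' _ => ?_
        split_ifs with h1 h2
        · exact absurd h1 (hint W' h2 W hW)
        · rfl
        · rfl
      rw [this]
      simp
    · simp [hW]
  have iK1 : ⟪Kop F V d (chi L), one⟫_ℝ = c0 * L.card := by
    rw [Kop_symm, K1, inner_smul_right, real_inner_comm, i1c]
  set α : ℝ := L.card / a0 with hα
  have hαa : α * a0 = L.card := by rw [hα]; field_simp
  set f := chi L - α • one with hf
  have i1f : ⟪one, f⟫_ℝ = 0 := by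
    rw [hf, inner_sub_right, inner_smul_right, i1c, i11, hαa, sub_self]
  have iff' : ⟪f, f⟫_ℝ = L.card - α * L.card := by
    have : ⟪f, f⟫_ℝ = ⟪chi L, f⟫_ℝ - α * ⟪one, f⟫_ℝ := by
      conv_lhs => rw [hf]
      rw [inner_sub_left, ← hf, inner_smul_left]
      simp
    rw [this, i1f, hf, inner_sub_right, inner_smul_right, icc, real_inner_comm, i1c]
    ring
  have iKff : ⟪Kop F V d f, f⟫_ℝ = - (α * c0 * L.card) := by
    have : ⟪Kop F V d f, f⟫_ℝ = ⟪Kop F V d (chi L), f⟫_ℝ - α * (c0 * ⟪one, f⟫_ℝ) := by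
      conv_lhs => rw [hf]
      rw [map_sub, map_smul, K1, inner_sub_left, ← hf, inner_smul_left, inner_smul_left]
      simp
    rw [this, i1f, hf, inner_sub_right, inner_smul_right, iKcc, iK1]
    ring
  have ho : ∀ x ∈ Ul F V d (0+1), ⟪x, f⟫_ℝ = 0 := by
    intro x hx
    induction hx using Submodule.span_induction with
    | mem x hx =>
      obtain ⟨T, hT, rfl⟩ := hx
      have : T = ⊥ := by
        apply Submodule.finrank_eq_zero.1
        omega
      rw [this]
      exact i1f
    | zero => simp
    | add x y _ _ h1 h2 => rw [inner_add_left, h1, h2, add_zero]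
    | smul c x _ h => rw [inner_smul_left, h, mul_zero]
  have sp := spec (Kop F V d) Kop_symm (fun j => Ul F V d (j+1))
    (fun a b h => Ul_mono (by omega)) (fun j => mu q j * cc q N d d j) d
    (fun j hj => Kop_inv (j+1) (by omega))
    (fun j hj => Kop_sub (j+1) (by omega))
    (by
      intro j hj hjd
      obtain ⟨i, rfl⟩ : ∃ i, j = i + 1 := ⟨j-1, by omega⟩
      have h := ev_lt q hq N d hN i (by omega) hjd
      have hp : 0 ≤ (∏ m ∈ Finset.range (i+1), q^m) * cc q N d d (i+1) :=
        mul_nonneg (Finset.prod_nonneg fun i _ => by positivity)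
          (cc_pos q hq N d d (i+1) (by omega)).le
      simp only [mu]
      rcases neg_one_pow_eq_or ℝ (i+1) with h1 | h1
      · rw [h1]; simp; nlinarith
      · rw [h1]; simp; nlinarith)
    (d-1) (by omega) f (by
      have : d - 1 + 1 + 1 = d + 1 := by omega
      simp only [this, Ul_top]
      trivial) ho
  have hl1 : mu q 1 * cc q N d d 1 = - c1 := by simp [mu, c1]
  simp only [hl1, iff', iKff] at sp
  have key : ∀ x : ℝ, c1 * a0 - x * (c0 + c1) = c1 * (q^N - 1) / (q^d - 1) * (a1 - x) := by
    intro x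
    have e : q^d - 1 ≠ 0 := by linarith
    field_simp
    linear_combination c1 * s0 - x * s1
  have kpos : 0 < c1 * (q^N - 1) / (q^d - 1) :=
    div_pos (mul_pos p2 (by linarith)) (by linarith)
  have rel : c1 * (L.card - α * L.card) - α * c0 * L.card = α * (c1 * a0 - L.card * (c0 + c1)) := by
    linear_combination (-c1) * hαa
  rw [key] at rel
  constructor
  · by_contra hlt
    push Not at hlt
    have hα0 : 0 < α := div_pos (p1.trans hlt) p3
    have h1 := sp.1
    have : α * (c1 * (q^N - 1) / (q^d - 1) * (a1 - L.card)) < 0 :=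
      mul_neg_of_pos_of_neg hα0 (mul_neg_of_pos_of_neg kpos (by linarith))
    linarith
  · intro heq
    rw [heq] at rel
    have h2 := sp.2 (by rw [heq]; linarith)
    have : chi L = f + α • one := by rw [hf]; abel
    rw [this]
    refine Submodule.add_mem _ h2 (Submodule.smul_mem _ _ (phi_mem _ _ ?_))
    rw [finrank_bot]; omega

end hof
section eqcase

variable {F V : Type} [Field F] [Fintype F] [AddCommGroup V] [Module F V] [Fintype V]

theorem inf_sup_span (D A : Submodule F V) (hDA : D ⊓ A = ⊥) (v : V) (hv : v ∉ A ⊔ D) :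
    (D ⊔ Submodule.span F {v}) ⊓ A = ⊥ := by
  rw [eq_bot_iff]
  rintro x ⟨hx1, hx2⟩
  obtain ⟨t, ht, y, hy, rfl⟩ := Submodule.mem_sup.1 hx1
  obtain ⟨r, rfl⟩ := Submodule.mem_span_singleton.1 hy
  by_cases hr : r = 0
  · subst hr
    have : t ∈ D ⊓ A := ⟨ht, by simpa using hx2⟩
    rw [hDA] at this
    simpa using this
  · exfalso
    apply hv
    have : v = r⁻¹ • ((t + r • v) + -t) := by
      rw [add_comm, neg_add_cancel_left, smul_smul, inv_mul_cancel₀ hr, one_smul]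
    rw [this]
    exact Submodule.smul_mem _ _ (Submodule.add_mem _
      (Submodule.mem_sup_left hx2) (Submodule.mem_sup_right (D.neg_mem ht)))

theorem sum_sup (D : Submodule F V) (u : V) (hu : u ∉ D) (g : V → ℝ) :
    (∑ v : V, if v ∈ D ⊔ Submodule.span F {u} then g v else 0) =
      ∑ r : F, ∑ v : V, if v ∈ D then g (r • u + v) else 0 := by
  have h1 : ∀ r : F, (∑ v : V, if v ∈ D then g (r • u + v) else 0) =
      ∑ v : V, if v - r • u ∈ D then g v else 0 := by
    intro r
    apply Fintype.sum_equiv (Equiv.addLeft (r • u))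
    intro v
    simp
  simp only [h1]
  rw [Finset.sum_comm]
  refine Finset.sum_congr rfl fun v _ => ?_
  split_ifs with hv
  · obtain ⟨x, hx, y, hy, rfl⟩ := Submodule.mem_sup.1 hv
    obtain ⟨r, rfl⟩ := Submodule.mem_span_singleton.1 hy
    rw [Finset.sum_eq_single r]
    · simp [hx]
    · intro s _ hs
      rw [if_neg]
      intro h
      apply hu
      have h2 := D.sub_mem h hx
      have h3 : (r - s) • u ∈ D := by
        convert h2 using 1
        rw [sub_smul]; abel
      exact (D.smul_mem_iff (sub_ne_zero.2 (Ne.symm hs))).1 h3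
    · simp
  · symm
    refine Finset.sum_eq_zero fun r _ => ?_
    rw [if_neg]
    intro h
    apply hv
    have : v = (v - r • u) + r • u := by abel
    rw [this]
    exact Submodule.add_mem _ (Submodule.mem_sup_left h)
      (Submodule.mem_sup_right (Submodule.smul_mem _ _ (Submodule.mem_span_singleton_self u)))

theorem not_mem_swap (M : Submodule F V) (v y : V) (hv : v ∉ M)
    (hy : y ∉ M ⊔ Submodule.span F {v}) : v ∉ M ⊔ Submodule.span F {y} := by
  intro h
  obtain ⟨m, hm, z, hz, hmz⟩ := Submodule.mem_sup.1 h
  obtain ⟨r, rfl⟩ := Submodule.mem_span_singleton.1 hz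
  by_cases hr : r = 0
  · subst hr
    apply hv
    rw [← hmz]
    simpa using hm
  · apply hy
    have : y = r⁻¹ • (-m + v) := by
      rw [← hmz, neg_add_cancel_left, smul_smul, inv_mul_cancel₀ hr, one_smul]
    rw [this]
    exact Submodule.smul_mem _ _ (Submodule.add_mem _ (Submodule.mem_sup_left (M.neg_mem hm))
      (Submodule.mem_sup_right (Submodule.mem_span_singleton_self v)))

theorem descent (A : Submodule F V) (g : V → ℝ) (e : ℕ)
    (hdim : Module.finrank F A + e + 1 < Module.finrank F V)
    (H : ∀ D : Submodule F V, Module.finrank F D = e + 1 → D ⊓ A = ⊥ → ∀ v, v ∉ A ⊔ D →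
      (∑ x : V, if x ∈ D then g (v + x) else 0) = 0) :
    ∀ D : Submodule F V, Module.finrank F D = e → D ⊓ A = ⊥ → ∀ v, v ∉ A ⊔ D →
      (∑ x : V, if x ∈ D then g (v + x) else 0) = 0 := by
  intro D hD hDA v hv
  set M := A ⊔ D with hM
  set h : V → ℝ := fun u => ∑ x : V, if x ∈ D then g (u + x) else 0 with hh
  have line : ∀ u z : V, z ∉ M → u ∉ M ⊔ Submodule.span F {z} → ∑ r : F, h (u + r • z) = 0 := by
    intro u z hz hu
    have hzD : z ∉ D := fun h => hz (Submodule.mem_sup_right h)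
    have h1 := H (D ⊔ Submodule.span F {z}) (by rw [finrank_sup_span D z hzD, hD])
      (inf_sup_span D A hDA z hz) u (by rwa [← sup_assoc])
    rw [sum_sup D z hzD (fun x => g (u + x))] at h1
    rw [← h1]
    refine Finset.sum_congr rfl fun r _ => ?_
    simp only [hh, add_assoc]
  have hMf : Module.finrank F (M ⊔ Submodule.span F {v} : Submodule F V) < Module.finrank F V := by
    rw [finrank_sup_span M v hv]
    have := Submodule.finrank_add_le_finrank_add_finrank A D
    rw [← hM] at this
    omega
  obtain ⟨y, hy⟩ : ∃ y, y ∉ M ⊔ Submodule.span F {v} := by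
    by_contra hcon
    push Not at hcon
    have : M ⊔ Submodule.span F {v} = ⊤ := by
      rw [eq_top_iff]; intro y _; exact hcon y
    rw [this, finrank_top] at hMf
    exact lt_irrefl _ hMf
  have hvmem : v ∈ M ⊔ Submodule.span F {v} :=
    Submodule.mem_sup_right (Submodule.mem_span_singleton_self v)
  have e1 : ∑ μ : F, ∑ r : F, h (v + r • (y + μ • v)) = 0 := by
    refine Finset.sum_eq_zero fun μ _ => ?_
    have hz : y + μ • v ∉ M ⊔ Submodule.span F {v} := by
      intro hc
      apply hy
      have := Submodule.sub_mem _ hc (Submodule.smul_mem _ μ hvmem)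
      simpa using this
    exact line _ _ (fun h => hz (Submodule.mem_sup_left h)) (not_mem_swap M v _ hv hz)
  rw [Finset.sum_comm] at e1
  have e2 : ∀ r : F, r ≠ 0 → ∑ μ : F, h (v + r • (y + μ • v)) = 0 := by
    intro r hr
    have hl := line (r • y) v hv (by
      intro hc
      exact hy ((Submodule.smul_mem_iff _ hr).1 hc))
    rw [← hl]
    apply Fintype.sum_equiv ((Equiv.mulLeft₀ r hr).trans (Equiv.addLeft 1))
    intro μ
    congr 1
    change v + r • (y + μ • v) = r • y + (1 + r * μ) • v
    simp only [smul_add, add_smul, one_smul, smul_smul]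
    abel
  rw [Finset.sum_eq_single (0:F) (fun r _ hr => e2 r hr) (by simp)] at e1
  simp only [zero_smul, add_zero, Finset.sum_const, Finset.card_univ, nsmul_eq_mul] at e1
  have hq : (Fintype.card F : ℝ) ≠ 0 := by exact_mod_cast Fintype.card_ne_zero
  exact (mul_eq_zero.1 e1).resolve_left hq

theorem lemR (w : V → ℝ) (hw : ∀ (r : F) (v : V), r ≠ 0 → w (r • v) = w v) (d : ℕ) (hd : 1 ≤ d)
    (A A' : Submodule F V) (hA : A ≤ A') (hdim : Module.finrank F A' + d ≤ Module.finrank F V)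
    (hB : ∀ B : Submodule F V, Module.finrank F B = d → B ⊓ A = ⊥ →
      (∑ v : V, if v ∈ B then w v else 0) = 0)
    (a : V) (ha : a ∈ A') (v : V) (hv : v ∉ A') : w (v + a) = w v := by
  have hq : (1:ℝ) < Fintype.card F := by exact_mod_cast Fintype.one_lt_card
  have S0 : ∀ D : Submodule F V, Module.finrank F D + 1 = d → D ⊓ A' = ⊥ → ∀ u, u ∉ A' ⊔ D →
      (∑ x : V, if x ∈ D then w x else 0) + ((Fintype.card F : ℝ) - 1) *
        (∑ x : V, if x ∈ D then w (u + x) else 0) = 0 := by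
    intro D hD hDA u hu
    have huD : u ∉ D := fun h => hu (Submodule.mem_sup_right h)
    have h1 := hB (D ⊔ Submodule.span F {u}) (by rw [finrank_sup_span D u huD, hD]) (by
      have := inf_sup_span D A' hDA u hu
      rw [eq_bot_iff, ← this]
      exact inf_le_inf_left _ hA)
    rw [sum_sup D u huD, ← Finset.add_sum_erase _ _ (Finset.mem_univ (0:F))] at h1
    have h2 : ∀ r ∈ Finset.univ.erase (0:F), (∑ x : V, if x ∈ D then w (r • u + x) else 0) =
        ∑ x : V, if x ∈ D then w (u + x) else 0 := by
      intro r hr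
      have hr0 : r ≠ 0 := Finset.ne_of_mem_erase hr
      symm
      apply Fintype.sum_equiv (LinearEquiv.smulOfNeZero F V r hr0).toEquiv
      intro x
      simp only [LinearEquiv.coe_toEquiv, LinearEquiv.smulOfNeZero_apply]
      rw [D.smul_mem_iff hr0, ← smul_add, hw _ _ hr0]
    rw [Finset.sum_congr rfl h2, Finset.sum_const, Finset.card_erase_of_mem (Finset.mem_univ _),
      Finset.card_univ, nsmul_eq_mul, Nat.cast_sub Fintype.card_pos] at h1
    simpa using h1
  set g : V → ℝ := fun v => w (v + a) - w v with hg
  have S : ∀ m e, e + m + 1 = d →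
      ∀ D : Submodule F V, Module.finrank F D = e → D ⊓ A' = ⊥ → ∀ v, v ∉ A' ⊔ D →
      (∑ x : V, if x ∈ D then g (v + x) else 0) = 0 := by
    intro m
    induction m with
    | zero =>
      intro e he D hD hDA v hv
      have h1 := S0 D (by omega) hDA v hv
      have h2 := S0 D (by omega) hDA (v + a) (by
        intro hc
        apply hv
        have := Submodule.sub_mem _ hc (Submodule.mem_sup_left ha : a ∈ A' ⊔ D)
        simpa using this)
      have h3 : (∑ x : V, if x ∈ D then g (v + x) else 0) =
          (∑ x : V, if x ∈ D then w (v + a + x) else 0) - ∑ x : V, if x ∈ D then w (v + x) else 0 := by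
        rw [← Finset.sum_sub_distrib]
        refine Finset.sum_congr rfl fun x _ => ?_
        split_ifs
        · simp only [hg]
          rw [add_right_comm]
        · simp
      rw [h3]
      have hne : (Fintype.card F : ℝ) - 1 ≠ 0 := by linarith
      apply (mul_eq_zero.1 _).resolve_left hne
      linear_combination h2 - h1
    | succ m ih =>
      intro e he
      exact descent A' g e (by omega) (ih (e+1) (by omega))
  have h := S (d-1) 0 (by omega) ⊥ (by simp) (by simp) v (by simpa using hv)
  simp only [Submodule.mem_bot, Finset.sum_ite_eq', Finset.mem_univ, if_true, add_zero, hg] at h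
  linarith

variable {d : ℕ}

theorem weight (f : EuclideanSpace ℝ {W : Submodule F V // Module.finrank F W = d})
    (hf : f ∈ Ul F V d 2) :
    ∃ w : V → ℝ, (∀ (r : F) (v : V), r ≠ 0 → w (r • v) = w v) ∧
      ∀ W, f W = ∑ v : V, if v ∈ W.1 then w v else 0 := by
  have hq : (1:ℝ) < Fintype.card F := by exact_mod_cast Fintype.one_lt_card
  induction hf using Submodule.span_induction with
  | mem f hf =>
    obtain ⟨T, hT, rfl⟩ := hf
    rcases (show Module.finrank F T = 0 ∨ Module.finrank F T = 1 by omega) with h | h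
    · have : T = ⊥ := Submodule.finrank_eq_zero.1 h
      subst this
      refine ⟨fun v => if v = 0 then 1 else 0, ?_, ?_⟩
      · intro r v hr
        simp [hr]
      · intro W
        rw [Finset.sum_eq_single 0]
        · simp [phi]
        · intro v _ hv
          simp [hv]
        · simp
    · refine ⟨fun v => if v ∈ T ∧ v ∉ (⊥ : Submodule F V) then 1 / ((Fintype.card F : ℝ) - 1) else 0,
        ?_, ?_⟩
      · intro r v hr
        simp only [Submodule.smul_mem_iff _ hr]
      · intro W
        have hne : (Fintype.card F : ℝ) - 1 ≠ 0 := by linarith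
        by_cases hTW : T ≤ W.1
        · have h1 := card_diff (⊥ : Submodule F V) T bot_le
          rw [h, finrank_bot, pow_one, pow_zero] at h1
          have h2 : (∑ v : V, if v ∈ W.1 then (if v ∈ T ∧ v ∉ (⊥ : Submodule F V) then
              1 / ((Fintype.card F : ℝ) - 1) else 0) else 0) =
              (∑ v : V, if v ∈ T ∧ v ∉ (⊥ : Submodule F V) then (1:ℝ) else 0) *
                (1 / ((Fintype.card F : ℝ) - 1)) := by
            rw [Finset.sum_mul]
            refine Finset.sum_congr rfl fun v _ => ?_
            by_cases hv : v ∈ T ∧ v ∉ (⊥ : Submodule F V)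
            · rw [if_pos hv, if_pos hv, if_pos (hTW hv.1), one_mul]
            · rw [if_neg hv, if_neg hv]; simp
          rw [h2, h1]
          simp only [phi, if_pos hTW]
          field_simp
        · simp only [phi, if_neg hTW]
          symm
          refine Finset.sum_eq_zero fun v _ => ?_
          split_ifs with hv hvT
          · exfalso
            apply hTW
            have hv0 : v ≠ 0 := by simpa using hvT.2
            have : Submodule.span F {v} = T := by
              apply Submodule.eq_of_le_of_finrank_eq
              · simpa using hvT.1
              · rw [h, finrank_span_singleton hv0]
            rw [← this]
            simpa using hv
          · rfl
          · rfl
  | zero => exact ⟨fun _ => 0, by simp, by simp⟩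
  | add f g _ _ h1 h2 =>
    obtain ⟨w1, a1, b1⟩ := h1
    obtain ⟨w2, a2, b2⟩ := h2
    refine ⟨fun v => w1 v + w2 v, ?_, ?_⟩
    · intro r v hr
      simp only [a1 r v hr, a2 r v hr]
    · intro W
      rw [PiLp.add_apply, b1, b2, ← Finset.sum_add_distrib]
      refine Finset.sum_congr rfl fun v _ => ?_
      split_ifs <;> simp
  | smul c f _ h =>
    obtain ⟨w1, a1, b1⟩ := h
    refine ⟨fun v => c * w1 v, ?_, ?_⟩
    · intro r v hr
      simp only [a1 r v hr]
    · intro W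
      rw [PiLp.smul_apply, b1, smul_eq_mul, Finset.mul_sum]
      refine Finset.sum_congr rfl fun v _ => ?_
      split_ifs <;> simp

/-- good pairs -/
def Good (w : V → ℝ) (I U : Submodule F V) : Prop :=
  (∀ v, v ∉ U → ∀ u ∈ U, w (v + u) = w v) ∧ ∃ x, ∀ u ∈ U, u ∉ I → w u = x

theorem good_base (w : V → ℝ) (A B : Submodule F V) (hAB : ¬ A ≤ B) (hBA : ¬ B ≤ A)
    (hA : ∀ v, v ∉ A → ∀ u ∈ A, w (v + u) = w v) (hB : ∀ v, v ∉ B → ∀ u ∈ B, w (v + u) = w v) :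
    Good w (A ⊓ B) (A ⊔ B) := by
  obtain ⟨a0, ha0, ha0'⟩ := SetLike.not_le_iff_exists.1 hAB
  obtain ⟨b0, hb0, hb0'⟩ := SetLike.not_le_iff_exists.1 hBA
  constructor
  · intro v hv u hu
    obtain ⟨a, ha, b, hb, rfl⟩ := Submodule.mem_sup.1 hu
    rw [← add_assoc, hB _ _ b hb, hA _ _ a ha]
    · exact fun h => hv (Submodule.mem_sup_left h)
    · intro h
      apply hv
      have := Submodule.sub_mem _ (Submodule.mem_sup_right h : v + a ∈ A ⊔ B)
        (Submodule.mem_sup_left ha : a ∈ A ⊔ B)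
      simpa using this
  · refine ⟨w (a0 + b0), ?_⟩
    intro u hu hu'
    obtain ⟨a, ha, b, hb, rfl⟩ := Submodule.mem_sup.1 hu
    by_cases h : a + b ∈ A
    · have h2 : a + b ∉ B := fun h' => hu' ⟨h, h'⟩
      have e1 := hB _ h2 (b0 - b) (B.sub_mem hb0 hb)
      have e2 := hA (a + b0) (fun h' => hb0' (by simpa using A.sub_mem h' ha)) (a0 - a)
        (A.sub_mem ha0 ha)
      rw [← e1, show a + b + (b0 - b) = a + b0 by abel, ← e2]
      congr 1; abel
    · have e1 := hA _ h (a0 - a) (A.sub_mem ha0 ha)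
      have e2 := hB (a0 + b) (fun h' => ha0' (by simpa using B.sub_mem h' hb)) (b0 - b)
        (B.sub_mem hb0 hb)
      rw [← e1, show a + b + (a0 - a) = a0 + b by abel, ← e2]
      congr 1; abel

theorem good_step (w : V → ℝ) (I U C : Submodule F V) (hG : Good w I U)
    (hUC : ¬ U ≤ C) (hCI : ¬ C ≤ I) (hUI : ¬ U ≤ I)
    (hC : ∀ v, v ∉ C → ∀ u ∈ C, w (v + u) = w v) :
    Good w (I ⊓ C) (U ⊔ C) := by
  obtain ⟨hU, x, hx⟩ := hG
  obtain ⟨u0, hu0, hu0I, hu0C⟩ : ∃ u ∈ U, u ∉ I ∧ u ∉ C := by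
    obtain ⟨a, ha, ha'⟩ := SetLike.not_le_iff_exists.1 hUC
    obtain ⟨b, hb, hb'⟩ := SetLike.not_le_iff_exists.1 hUI
    by_cases h1 : a ∈ I
    · by_cases h2 : b ∈ C
      · refine ⟨a + b, U.add_mem ha hb, ?_, ?_⟩
        · intro h; exact hb' (by simpa using I.sub_mem h h1)
        · intro h; exact ha' (by simpa using C.sub_mem h h2)
      · exact ⟨b, hb, hb', h2⟩
    · exact ⟨a, ha, h1, ha'⟩
  have hx0 : w u0 = x := hx u0 hu0 hu0I
  constructor
  · intro v hv u hu
    obtain ⟨a, ha, b, hb, rfl⟩ := Submodule.mem_sup.1 hu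
    rw [← add_assoc, hC _ _ b hb, hU _ _ a ha]
    · exact fun h => hv (Submodule.mem_sup_left h)
    · intro h
      apply hv
      have := Submodule.sub_mem _ (Submodule.mem_sup_right h : v + a ∈ U ⊔ C)
        (Submodule.mem_sup_left ha : a ∈ U ⊔ C)
      simpa using this
  · refine ⟨x, ?_⟩
    intro v hv hv'
    by_cases hvC : v ∈ C
    · have hvI : v ∉ I := fun h => hv' ⟨h, hvC⟩
      by_cases hvU : v ∈ U
      · exact hx v hvU hvI
      · rw [← hU v hvU u0 hu0, add_comm, hC u0 hu0C v hvC, hx0]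
    · obtain ⟨u, hu, c, hc, rfl⟩ := Submodule.mem_sup.1 hv
      have huC : u ∉ C := fun h => hvC (C.add_mem h hc)
      rw [hC u huC c hc]
      by_cases huI : u ∈ I
      · by_cases hCU : C ≤ U
        · obtain ⟨c1, hc1, hc1'⟩ := SetLike.not_le_iff_exists.1 hCI
          rw [← hC u huC c1 hc1]
          apply hx _ (U.add_mem hu (hCU hc1))
          intro h; exact hc1' (by simpa using I.sub_mem h huI)
        · obtain ⟨c1, hc1, hc1'⟩ := SetLike.not_le_iff_exists.1 hCU
          rw [← hC u huC c1 hc1, add_comm, hU c1 hc1' u hu, ← hU c1 hc1' u0 hu0, add_comm,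
            hC u0 hu0C c1 hc1, hx0]
      · exact hx u hu huI

theorem good_all (w : V → ℝ) (A B : Submodule F V) (hne : A ≠ B)
    (L : Finset {W : Submodule F V // Module.finrank F W = d})
    (hAd : Module.finrank F A = d) (hBd : Module.finrank F B = d)
    (hA : ∀ v, v ∉ A → ∀ u ∈ A, w (v + u) = w v) (hB : ∀ v, v ∉ B → ∀ u ∈ B, w (v + u) = w v)
    (hL : ∀ C ∈ L, ∀ v, v ∉ C.1 → ∀ u ∈ C.1, w (v + u) = w v) :
    ∃ I U : Submodule F V, Good w I U ∧ I < A ∧ A < U ∧ ∀ C ∈ L, I ≤ C.1 ∧ C.1 ≤ U := by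
  have hAB : ¬ A ≤ B := fun h => hne (Submodule.eq_of_le_of_finrank_eq h (by omega))
  have hBA : ¬ B ≤ A := fun h => hne (Submodule.eq_of_le_of_finrank_eq h (by omega)).symm
  induction L using Finset.induction_on with
  | empty =>
    refine ⟨A ⊓ B, A ⊔ B, good_base w A B hAB hBA hA hB, ?_, ?_, by simp⟩
    · exact inf_lt_left.2 hAB
    · exact left_lt_sup.2 hBA
  | insert C L _ ih =>
    obtain ⟨I, U, hG, hI, hU, hh⟩ := ih (fun C hC => hL C (Finset.mem_insert_of_mem hC))
    have r1 := Submodule.finrank_lt_finrank_of_lt hI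
    have r2 := Submodule.finrank_lt_finrank_of_lt hU
    have r3 := C.2
    refine ⟨I ⊓ C.1, U ⊔ C.1, good_step w I U C.1 hG ?_ ?_ ?_
      (hL C (Finset.mem_insert_self _ _)), lt_of_le_of_lt inf_le_left hI,
      lt_of_lt_of_le hU le_sup_left, ?_⟩
    · intro h; have := Submodule.finrank_mono h; omega
    · intro h; have := Submodule.finrank_mono h; omega
    · intro h; have := Submodule.finrank_mono h; omega
    · intro D hD
      rcases Finset.mem_insert.1 hD with rfl | hD
      · exact ⟨inf_le_right, le_sup_right⟩
      · exact ⟨inf_le_of_left_le (hh D hD).1, le_sup_of_le_left (hh D hD).2⟩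

end eqcase
section final

variable {F V : Type} [Field F] [Fintype F] [AddCommGroup V] [Module F V] [Fintype V]

theorem exists_not_mem (U : Submodule F V) (h : Module.finrank F U < Module.finrank F V) :
    ∃ y, y ∉ U := by
  by_contra hcon
  push Not at hcon
  have : U = ⊤ := by
    rw [eq_top_iff]; intro y _; exact hcon y
  rw [this, finrank_top] at h
  exact lt_irrefl _ h

theorem exists_not_mem2 (A B : Submodule F V) (hA : Module.finrank F A < Module.finrank F V)
    (hB : Module.finrank F B < Module.finrank F V) : ∃ y, y ∉ A ∧ y ∉ B := by
  obtain ⟨a, ha⟩ := exists_not_mem A hA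
  obtain ⟨b, hb⟩ := exists_not_mem B hB
  by_cases h1 : a ∈ B
  · by_cases h2 : b ∈ A
    · refine ⟨a + b, ?_, ?_⟩
      · intro h; exact ha (by simpa using A.sub_mem h h2)
      · intro h; exact hb (by simpa using B.sub_mem h h1)
    · exact ⟨b, h2, hb⟩
  · exact ⟨a, ha, h1⟩

variable {d : ℕ}

theorem const_contra (w : V → ℝ) (κ : ℝ) (hκ : ∀ v, v ≠ 0 → w v = κ)
    (W : Submodule F V) (hW : Module.finrank F W = d) :
    (∑ v : V, if v ∈ W then w v else 0) = κ * (Fintype.card F : ℝ)^d + (w 0 - κ) := by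
  rw [← hW, ← card_sub, Finset.mul_sum]
  have : w 0 - κ = ∑ v : V, if v = 0 then (w 0 - κ) else 0 := by simp
  rw [this, ← Finset.sum_add_distrib]
  refine Finset.sum_congr rfl fun v _ => ?_
  by_cases hv : v = 0
  · subst hv; simp
  · simp [hv, hκ v hv]

variable [Fintype {W : Submodule F V // Module.finrank F W = d}]

theorem eq_case (hd : 1 ≤ d) (hN : 2 * d ≤ Module.finrank F V)
    (L : Finset {W : Submodule F V // Module.finrank F W = d})
    (hint : ∀ W ∈ L, ∀ W' ∈ L, W.1 ⊓ W'.1 ≠ ⊥) (hne : L.Nonempty) (hchi : chi L ∈ Ul F V d 2) :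
    (∃ v : V, v ≠ 0 ∧ ∀ W ∈ L, v ∈ W.1) ∨
    (Module.finrank F V = 2 * d ∧ ∃ U : Submodule F V, U ≠ ⊤ ∧ ∀ W ∈ L, W.1 ≤ U) := by
  by_contra hcon
  push Not at hcon
  obtain ⟨h1, h2⟩ := hcon
  obtain ⟨w, hw, hwf⟩ := weight (chi L) hchi
  have hB : ∀ A ∈ L, ∀ B : Submodule F V, Module.finrank F B = d → B ⊓ A.1 = ⊥ →
      (∑ v : V, if v ∈ B then w v else 0) = 0 := by
    intro A hA B hB hBA
    rw [← hwf ⟨B, hB⟩]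
    have : (⟨B, hB⟩ : {W : Submodule F V // Module.finrank F W = d}) ∉ L := by
      intro h
      exact hint _ h A hA hBA
    exact if_neg this
  obtain ⟨A, hA⟩ := hne
  suffices hk : ∃ κ, ∀ v, v ≠ 0 → w v = κ by
    obtain ⟨κ, hκ⟩ := hk
    obtain ⟨C, hC⟩ := Submodule.exists_isCompl A.1
    have hCf := Submodule.finrank_add_eq_of_isCompl hC
    rw [A.2] at hCf
    obtain ⟨B, -, hBC, hBd⟩ := exists_between (⊥ : Submodule F V) d C bot_le (by
      rw [finrank_bot]; omega)
    rw [finrank_bot, zero_add] at hBd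
    have e1 := hB A hA B hBd (by
      rw [eq_bot_iff, ← hC.inf_eq_bot, inf_comm A.1]
      exact inf_le_inf_right _ hBC)
    have e2 := hwf A
    have e3 : chi L A = 1 := if_pos hA
    rw [e3, const_contra w κ hκ A.1 A.2] at e2
    rw [const_contra w κ hκ B hBd] at e1
    linarith
  rcases hN.eq_or_lt with hN' | hN'
  · -- the case of dimension twice d
    have htr : ∀ C ∈ L, ∀ v, v ∉ C.1 → ∀ u ∈ C.1, w (v + u) = w v := by
      intro C hC v hv u hu
      exact lemR w hw d hd C.1 C.1 le_rfl (by rw [C.2]; omega) (hB C hC) u hu v hv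
    have hA0 : A.1 ≠ ⊥ := by
      intro h
      have := A.2
      rw [h, finrank_bot] at this
      omega
    obtain ⟨v, hv, hv0⟩ := Submodule.exists_mem_ne_zero_of_ne_bot hA0
    obtain ⟨B, hBL, hvB⟩ := h1 v hv0
    have hAB : A.1 ≠ B.1 := fun h => hvB (h ▸ hv)
    obtain ⟨I, U, hG, -, -, hIU⟩ := good_all w A.1 B.1 hAB L A.2 B.2 (htr A hA) (htr B hBL) htr
    have hI : I = ⊥ := by
      by_contra hI
      obtain ⟨v, hv, hv0⟩ := Submodule.exists_mem_ne_zero_of_ne_bot hI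
      obtain ⟨B, hBL, hvB⟩ := h1 v hv0
      exact hvB ((hIU B hBL).1 hv)
    have hU : U = ⊤ := by
      by_contra hU
      obtain ⟨W, hW, hWU⟩ := h2 hN'.symm U hU
      exact hWU (hIU W hW).2
    obtain ⟨x, hx⟩ := hG.2
    refine ⟨x, fun v hv => hx v (by rw [hU]; trivial) (by rw [hI]; simpa using hv)⟩
  · have hlt : ∀ C : {W : Submodule F V // Module.finrank F W = d},
        Module.finrank F C.1 < Module.finrank F V := fun C => by rw [C.2]; omega
    have c1 : ∀ C ∈ L, ∀ u v, u ∉ C.1 → v ∉ C.1 ⊔ Submodule.span F {u} → w v = w u := by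
      intro C hC u v hu hv
      have hvu : v - u ∉ C.1 ⊔ Submodule.span F {u} := by
        intro h
        apply hv
        have := Submodule.add_mem _ h
          (Submodule.mem_sup_right (Submodule.mem_span_singleton_self u) :
            u ∈ C.1 ⊔ Submodule.span F {u})
        simpa using this
      have h3 := not_mem_swap C.1 u (v - u) hu hvu
      have := lemR w hw d hd C.1 (C.1 ⊔ Submodule.span F {v - u}) le_sup_left (by
        rw [finrank_sup_span C.1 _ (fun h => hvu (Submodule.mem_sup_left h)), C.2]
        omega) (hB C hC) (v - u)
        (Submodule.mem_sup_right (Submodule.mem_span_singleton_self _)) u h3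
      rwa [add_sub_cancel] at this
    have c2 : ∀ C ∈ L, ∀ u v, u ∉ C.1 → v ∉ C.1 → w v = w u := by
      intro C hC u v hu hv
      by_cases hvu : v ∈ C.1 ⊔ Submodule.span F {u}
      · obtain ⟨y, hy⟩ := exists_not_mem (C.1 ⊔ Submodule.span F {u}) (by
          rw [finrank_sup_span C.1 u hu, C.2]; omega)
        rw [← c1 C hC u y hu hy, ← c1 C hC v y hv]
        intro h
        apply hy
        have hle : C.1 ⊔ Submodule.span F {v} ≤ C.1 ⊔ Submodule.span F {u} :=
          sup_le le_sup_left (by rwa [Submodule.span_singleton_le_iff_mem])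
        exact hle h
      · exact c1 C hC u v hu hvu
    obtain ⟨u, hu⟩ := exists_not_mem A.1 (hlt A)
    refine ⟨w u, fun v hv0 => ?_⟩
    obtain ⟨B, hBL, hvB⟩ := h1 v hv0
    obtain ⟨z, hzA, hzB⟩ := exists_not_mem2 A.1 B.1 (hlt A) (hlt B)
    rw [c2 B hBL z v hzB hvB, c2 A hA u z hu hzA]

end final

end EKR

/-- Erdős–Ko–Rado for projective spaces: a pairwise intersecting family of
$k$-subspaces of $\mathrm{PG}(n,q)$, $n \ge 2k+1$, has size at most $\binom{n}{k}_q$,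
with equality iff it is a point-pencil, or $n = 2k+1$ and it is the family of all
$k$-subspaces in a fixed hyperplane. -/
theorem stmt18 (q n k : ℕ) (F : Type) [Field F] [Fintype F]
    (hq : Fintype.card F = q) (hn : 2*k + 1 ≤ n)
    [Fintype {W : Submodule F (Fin (n+1) → F) // Module.finrank F W = k + 1}]
    (L : Finset {W : Submodule F (Fin (n+1) → F) // Module.finrank F W = k + 1})
    (hint : ∀ W ∈ L, ∀ W' ∈ L, W.1 ⊓ W'.1 ≠ ⊥) :
    L.card ≤ gbinom q n k ∧
    (L.card = gbinom q n k ↔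
      ((∃ P : Submodule F (Fin (n+1) → F), Module.finrank F P = 1 ∧
          L = Finset.univ.filter fun W => P ≤ W.1) ∨
       (n = 2*k + 1 ∧ ∃ H : Submodule F (Fin (n+1) → F), Module.finrank F H = n ∧
          L = Finset.univ.filter fun W => W.1 ≤ H))) := by
  have hq2 : 2 ≤ q := by
    rw [← hq]; exact Fintype.one_lt_card
  have hV : Module.finrank F (Fin (n+1) → F) = n + 1 := by simp
  have hg1 : EKR.cc q (n+1) 0 (k+1) 1 = gbinom q n k := by
    have := EKR.cc_gb q hq2 (n+1) k 1 (by omega)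
    rwa [add_comm 1 k, Nat.add_sub_cancel] at this
  have hpen : ∀ P : Submodule F (Fin (n+1) → F), Module.finrank F P = 1 →
      (Finset.univ.filter fun W : {W : Submodule F (Fin (n+1) → F) //
        Module.finrank F W = k + 1} => P ≤ W.1).card = gbinom q n k := by
    intro P hP
    have h := EKR.count (d := k+1) ⊤ (⊥ : Submodule F (Fin (n+1) → F)) bot_le k P le_top (by simp)
      (by omega)
    rw [finrank_top, finrank_bot, hV, hP, hq, hg1] at h
    simp only [le_top, inf_bot_eq, and_true] at h
    rw [Finset.sum_boole] at h
    exact_mod_cast h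
  have hhyp : n = 2*k+1 → ∀ H : Submodule F (Fin (n+1) → F), Module.finrank F H = n →
      (Finset.univ.filter fun W : {W : Submodule F (Fin (n+1) → F) //
        Module.finrank F W = k + 1} => W.1 ≤ H).card = gbinom q n k := by
    intro hnk H hH
    have h := EKR.count (d := k+1) H (⊥ : Submodule F (Fin (n+1) → F)) bot_le (k+1) ⊥ bot_le (by simp)
      (by simp)
    have h2 := EKR.cc_gb q hq2 n (k+1) 0 (by omega)
    rw [zero_add, Nat.sub_zero, hnk, EKR.gb_symm q hq2 k, ← hnk] at h2
    rw [finrank_bot, hH, hq, h2] at h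
    simp only [bot_le, inf_bot_eq, and_true, true_and] at h
    rw [Finset.sum_boole] at h
    exact_mod_cast h
  have hof := EKR.hoffman (by omega) (by rw [hV]; omega) L hint
  rw [hV, hq, hg1] at hof
  refine ⟨by exact_mod_cast hof.1, ?_, ?_⟩
  · intro heq
    have hchi := hof.2 (by exact_mod_cast heq)
    have hpos : 0 < L.card := by
      have := EKR.cc_pos q (by exact_mod_cast hq2) (n+1) 0 (k+1) 1 (by omega)
      rw [hg1, ← heq] at this
      exact_mod_cast this
    rcases EKR.eq_case (by omega) (by rw [hV]; omega) L hint (Finset.card_pos.1 hpos) hchi with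
      ⟨v, hv0, hv⟩ | ⟨hN, U, hU, hLU⟩
    · left
      have hf := finrank_span_singleton (K := F) hv0
      refine ⟨Submodule.span F {v}, hf, ?_⟩
      apply Finset.eq_of_subset_of_card_le
      · intro W hW
        simpa using hv W hW
      · rw [hpen _ hf, heq]
    · right
      have hnk : n = 2*k+1 := by rw [hV] at hN; omega
      refine ⟨hnk, ?_⟩
      have hUlt := Submodule.finrank_lt hU
      rw [hV] at hUlt
      obtain ⟨H, hUH, -, hH⟩ := EKR.exists_between U (n - Module.finrank F U) ⊤ le_top (by
        rw [finrank_top, hV]; omega)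
      have hHn : Module.finrank F H = n := by omega
      refine ⟨H, hHn, ?_⟩
      apply Finset.eq_of_subset_of_card_le
      · intro W hW
        simpa using (hLU W hW).trans hUH
      · rw [hhyp hnk H hHn, heq]
  · rintro (⟨P, hP, rfl⟩ | ⟨hnk, H, hH, rfl⟩)
    · exact hpen P hP
    · exact hhyp hnk H hH
end

section
/- Let $\mathcal{L}$ be a Cameron-Liebler set of $k$-spaces in $\mathrm{PG}(n,q)$, $n \geq 2k+1$, with parameter $x = 1$ (defined via the disjointness-counting property). Then any two elements of $\mathcal{L}$ intersect nontrivially; consequently, $\mathcal{L}$ is either the set of all $k$-subspaces through a fixed point, or $n = 2k+1$ and $\mathcal{L}$ is the set of all $k$-subspaces in a fixed hyperplane. -/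
open Finset
open scoped Classical

/-- `L` is a Cameron-Liebler set of `k`-spaces of `PG(n,q)` with parameter `x`:
it has size `x * [n choose k]_q` and for every `k`-subspace `π` the number of
elements of `L` disjoint from `π` is `(x - χ(π)) * [n-k-1 choose k]_q * q^(k²+k)`. -/
def IsCameronLiebler (q n k : ℕ) (F : Type) [Field F] [Fintype F]
    [Fintype {W : Submodule F (Fin (n+1) → F) // Module.finrank F W = k + 1}]
    (L : Finset {W : Submodule F (Fin (n+1) → F) // Module.finrank F W = k + 1})
    (x : ℝ) : Prop :=
  (L.card : ℝ) = x * gbinom q n k ∧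
  ∀ π : {W : Submodule F (Fin (n+1) → F) // Module.finrank F W = k + 1},
    (((L.filter fun W => W.1 ⊓ π.1 = ⊥).card : ℝ))
      = (x - (if π ∈ L then 1 else 0)) * ((gbinom q (n - k - 1) k : ℝ) * (q : ℝ)^(k^2 + k))

section CL
set_option linter.unusedSectionVars false
variable {F V : Type} [Field F] [Fintype F] [AddCommGroup V] [Module F V] [Fintype V]

lemma gb_P (q : ℕ) : ∀ a b : ℕ, ((q:ℝ)^(b+1) - 1) * (q:ℝ)^b * gbinom q a (b+1)
    = ((q:ℝ)^a - (q:ℝ)^b) * gbinom q a b := by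
  intro a
  induction a with
  | zero =>
    intro b
    cases b <;> simp [gbinom]
  | succ a ih =>
    have Q : ∀ b, (q:ℝ)^b * (((q:ℝ)^(b+1) - 1) * gbinom q (a+1) (b+1)) 
        = (q:ℝ)^b * (((q:ℝ)^(a+1) - 1) * gbinom q a b) := by
      intro b
      have := ih b
      simp only [gbinom]; push_cast
      linear_combination (q:ℝ)^(b+1) * this
    intro b
    cases b with
    | zero => 
      have := Q 0
      have h2 : gbinom q (a+1) 0 = 1 := by simp [gbinom]
      have h3 : gbinom q a 0 = 1 := by cases a <;> simp [gbinom]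
      rw [h3] at this
      rw [h2]
      simpa using this
    | succ b =>
      have h1 := Q (b+1)
      have h2 := ih b
      have h3 : (gbinom q (a+1) (b+1) : ℝ) = gbinom q a b + (q:ℝ)^(b+1) * gbinom q a (b+1) := by
        simp only [gbinom]; push_cast; ring
      rw [h3]
      linear_combination h1 + q * h2

lemma gb_Q (q : ℕ) (hq : 0 < q) (a b : ℕ) : ((q:ℝ)^(b+1) - 1) * gbinom q (a+1) (b+1)
    = ((q:ℝ)^(a+1) - 1) * gbinom q a b := by
  have := gb_P q a b
  have h : (q:ℝ)^b ≠ 0 := by positivity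
  apply mul_left_cancel₀ h
  simp only [gbinom]; push_cast
  linear_combination (q:ℝ)^(b+1) * this

lemma gb_zero (q a : ℕ) : gbinom q a 0 = 1 := by cases a <;> simp [gbinom]

lemma gb_mono (q a b : ℕ) : gbinom q a b ≤ gbinom q (a+1) (b+1) := by
  simp [gbinom]

lemma gb_pos (q : ℕ) (e t : ℕ) : 0 < gbinom q (e+t) t := by
  induction t with
  | zero => simp [gb_zero]
  | succ t ih => exact lt_of_lt_of_le ih (gb_mono q (e+t) t)

/-- the number of `m`-spaces through an `i`-space disjoint from a `u`-space -/
def acnt (q u e m i : ℕ) : ℕ := if i ≤ m then q^(u*(m-i)) * gbinom q (e+(m-i)) (m-i) else 0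

noncomputable def Gr (F V : Type) [Field F] [Fintype F] [AddCommGroup V] [Module F V] [Fintype V]
    (m : ℕ) : Finset (Submodule F V) :=
  (Set.toFinite {W : Submodule F V | Module.finrank F W = m}).toFinset

lemma mem_Gr {m : ℕ} {W : Submodule F V} : W ∈ Gr F V m ↔ Module.finrank F W = m := by
  simp [Gr]

lemma dcount {α β : Type} (s : Finset α) (t : Finset β) (R : α → β → Prop) [∀ a b, Decidable (R a b)] (g : α → ℝ) (h : β → ℝ) :
    ∑ W ∈ s, g W * ∑ v ∈ t with R W v, h v = ∑ v ∈ t, h v * ∑ W ∈ s with R W v, g W := by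
  simp only [Finset.sum_filter, Finset.mul_sum]
  rw [Finset.sum_comm]
  refine Finset.sum_congr rfl fun v _ => Finset.sum_congr rfl fun W _ => ?_
  split_ifs <;> ring

lemma dcount1 {α β : Type} (s : Finset α) (t : Finset β) (R : α → β → Prop) [∀ a b, Decidable (R a b)] :
    ∑ W ∈ s, (#{v ∈ t | R W v} : ℝ) = ∑ v ∈ t, (#{W ∈ s | R W v} : ℝ) := by
  have := dcount s t R (fun _ => 1) (fun _ => 1)
  simpa using this

lemma q_gt : (1:ℝ) < Fintype.card F := by
  exact_mod_cast Fintype.one_lt_card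

lemma card_mem (W : Submodule F V) :
    (#{v : V | v ∈ W} : ℝ) = (Fintype.card F : ℝ)^(Module.finrank F W) := by
  have := Module.card_eq_pow_finrank (K := F) (V := W)
  rw [Fintype.card_subtype] at this
  exact_mod_cast this

lemma card_diff {S W : Submodule F V} (h : S ≤ W) :
    (#{v : V | v ∈ W ∧ v ∉ S} : ℝ) =
      (Fintype.card F : ℝ)^(Module.finrank F W) - (Fintype.card F : ℝ)^(Module.finrank F S) := by
  rw [← card_mem, ← card_mem]
  have : ({v : V | v ∈ W} : Finset V) = ({v : V | v ∈ W ∧ v ∉ S} : Finset V) ∪ ({v : V | v ∈ S} : Finset V) := by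
    ext v; simp; constructor
    · intro hv; by_cases h' : v ∈ S <;> simp [*]
    · rintro (h'|h'); exacts [h'.1, h h']
  rw [this, Finset.card_union_of_disjoint]
  · push_cast; ring
  · rw [Finset.disjoint_left]; intro v; simp

lemma finrank_sup_span {S : Submodule F V} {v : V} (hv : v ∉ S) :
    Module.finrank F (S ⊔ Submodule.span F {v} : Submodule F V) = Module.finrank F S + 1 := by
  have hv0 : v ≠ 0 := by rintro rfl; exact hv S.zero_mem
  have h := Submodule.finrank_sup_add_finrank_inf_eq S (Submodule.span F {v})
  have h1 : S ⊓ Submodule.span F {v} = ⊥ := by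
    rw [← disjoint_iff, Submodule.disjoint_span_singleton' hv0]; exact hv
  rw [h1, finrank_span_singleton hv0] at h
  simpa using h

lemma inf_sup_span {S U : Submodule F V} {v : V} (h : S ⊓ U = ⊥) (hv : v ∉ S ⊔ U) :
    (S ⊔ Submodule.span F {v}) ⊓ U = ⊥ := by
  rw [eq_bot_iff]
  rintro x ⟨hx, hxU⟩
  obtain ⟨s, hs, y, hy, rfl⟩ := Submodule.mem_sup.1 hx
  obtain ⟨a, rfl⟩ := Submodule.mem_span_singleton.1 hy
  by_cases ha : a = 0
  · subst ha
    have : s ∈ S ⊓ U := ⟨hs, by simpa using hxU⟩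
    rw [h] at this; simpa using this
  · exfalso; apply hv
    have h1 : a • v ∈ S ⊔ U := by
      have := Submodule.sub_mem _ (Submodule.mem_sup_right (S := S) hxU) (Submodule.mem_sup_left (T := U) hs)
      simpa using this
    exact (Submodule.smul_mem_iff _ ha).1 h1

lemma cntA (m e : ℕ) (U : Submodule F V) (hN : Module.finrank F V = Module.finrank F U + m + e) :
    ∀ (t : ℕ) (S : Submodule F V), Module.finrank F S + t = m → S ⊓ U = ⊥ →
    ((#{W ∈ Gr F V m | S ≤ W ∧ W ⊓ U = ⊥} : ℕ) : ℝ)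
      = ((Fintype.card F)^(Module.finrank F U * t) * gbinom (Fintype.card F) (e+t) t : ℕ) := by
  intro t
  induction t with
  | zero =>
    intro S hS hSU
    have : ({W ∈ Gr F V m | S ≤ W ∧ W ⊓ U = ⊥} : Finset _) = {S} := by
      ext W; simp only [mem_filter, mem_Gr, mem_singleton]
      constructor
      · rintro ⟨h1, h2, -⟩
        exact (Submodule.eq_of_le_of_finrank_eq h2 (by omega)).symm
      · rintro rfl; exact ⟨by omega, le_rfl, hSU⟩
    rw [this]; simp [gb_zero]
  | succ t ih =>
    intro S hS hSU
    set q := Fintype.card F with hq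
    set u := Module.finrank F U with hu
    have q1 : (1:ℝ) < q := q_gt
    have key : ∑ W ∈ Gr F V m with (S ≤ W ∧ W ⊓ U = ⊥), (#{v : V | v ∈ W ∧ v ∉ S} : ℝ)
        = ∑ v : V with v ∉ S ⊔ U, (#{W ∈ Gr F V m | (S ⊔ Submodule.span F {v}) ≤ W ∧ W ⊓ U = ⊥} : ℝ) := by
      rw [dcount1 _ univ (fun W v => v ∈ W ∧ v ∉ S), Finset.sum_filter (fun v => v ∉ S ⊔ U)]
      refine Finset.sum_congr rfl fun v _ => ?_
      by_cases hv : v ∉ S ⊔ U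
      · rw [if_pos hv]
        congr 2
        ext W
        simp only [mem_filter, sup_le_iff, Submodule.span_singleton_le_iff_mem]
        have : v ∉ S := fun h => hv (Submodule.mem_sup_left h)
        tauto
      · rw [if_neg hv]
        rw [not_not] at hv
        rw [Nat.cast_eq_zero, Finset.card_eq_zero, Finset.filter_eq_empty_iff]
        rintro W hW ⟨h1, h2⟩
        simp only [mem_filter] at hW
        obtain ⟨s, hs, y, hy, rfl⟩ := Submodule.mem_sup.1 hv
        have h3 : y ∈ W ⊓ U := ⟨by simpa using W.sub_mem h1 (hW.2.1 hs), hy⟩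
        rw [hW.2.2] at h3
        have : y = 0 := by simpa using h3
        subst this
        exact h2 (by simpa using hs)
    have hL : ∀ W ∈ (Gr F V m).filter (fun W => S ≤ W ∧ W ⊓ U = ⊥), (#{v : V | v ∈ W ∧ v ∉ S} : ℝ)
        = (q:ℝ)^m - (q:ℝ)^(Module.finrank F S) := by
      intro W hW
      simp only [mem_filter, mem_Gr] at hW
      rw [card_diff hW.2.1, hW.1]
    have hR : ∀ v ∈ (univ : Finset V).filter (fun v => v ∉ S ⊔ U), 
        (#{W ∈ Gr F V m | (S ⊔ Submodule.span F {v}) ≤ W ∧ W ⊓ U = ⊥} : ℝ)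
        = (q^(u * t) * gbinom q (e+t) t : ℕ) := by
      intro v hv
      simp only [mem_filter, mem_univ, true_and] at hv
      have hvS : v ∉ S := fun h => hv (Submodule.mem_sup_left h)
      apply ih
      · rw [finrank_sup_span hvS]; omega
      · exact inf_sup_span hSU hv
    rw [Finset.sum_congr rfl hL, Finset.sum_congr rfl hR, Finset.sum_const, Finset.sum_const,
      nsmul_eq_mul, nsmul_eq_mul] at key
    have hc : (#{v : V | v ∉ S ⊔ U} : ℝ) = (q:ℝ)^(u+m+e) - (q:ℝ)^(u + Module.finrank F S) := by
      have := card_diff (F := F) (V := V) (S := S ⊔ U) (W := ⊤) le_top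
      simp only [Submodule.mem_top, true_and, finrank_top] at this
      rw [this, hN]
      have h2 := Submodule.finrank_sup_add_finrank_inf_eq S U
      rw [hSU, finrank_bot] at h2
      congr 2; omega
    rw [hc] at key
    have hS' : m = Module.finrank F S + t + 1 := by omega
    set i := Module.finrank F S with hi
    have hQ := gb_Q q (by exact_mod_cast (zero_lt_one.trans q1)) (e+t) t
    have hne : ((q:ℝ)^m - (q:ℝ)^i) ≠ 0 := by
      have := pow_lt_pow_right₀ q1 (show i < m by omega)
      linarith
    apply mul_right_cancel₀ hne
    rw [key, hS']
    push_cast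
    rw [← add_assoc e t 1]
    linear_combination (-(q:ℝ)^(i+u*t+u)) * hQ

lemma cnt (m e i : ℕ) (U S : Submodule F V) (hN : Module.finrank F V = Module.finrank F U + m + e)
    (hi : Module.finrank F S = i) (hSU : S ⊓ U = ⊥) :
    ((#{W ∈ Gr F V m | S ≤ W ∧ W ⊓ U = ⊥} : ℕ) : ℝ)
      = (acnt (Fintype.card F) (Module.finrank F U) e m i : ℝ) := by
  unfold acnt
  split_ifs with h
  · exact cntA m e U hN (m - i) S (by omega) hSU
  · rw [Nat.cast_zero, Nat.cast_eq_zero, Finset.card_eq_zero, Finset.filter_eq_empty_iff]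
    rintro W hW ⟨h1, -⟩
    rw [mem_Gr] at hW
    have := Submodule.finrank_mono h1
    omega

lemma acnt_pos (q u e m i : ℕ) (hq : 0 < q) (hi : i ≤ m) : 0 < acnt q u e m i := by
  unfold acnt
  rw [if_pos hi]
  have := gb_pos q e (m-i)
  positivity

/-- sum over the nonzero vectors of a subspace -/
noncomputable def sg (h : V → ℝ) (W : Submodule F V) : ℝ := ∑ v : V with (v ∈ W ∧ v ≠ 0), h v

lemma sg_add {h : V → ℝ} {S W : Submodule F V} (hSW : S ≤ W) :
    sg h W = sg h S + ∑ v : V with (v ∈ W ∧ v ∉ S), h v := by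
  unfold sg
  rw [← Finset.sum_union]
  · congr 1
    ext v
    simp only [mem_union, mem_filter, mem_univ, true_and]
    have := @hSW v
    have h0 : v = 0 → v ∈ S := by rintro rfl; exact S.zero_mem
    tauto
  · rw [Finset.disjoint_left]; intro v; simp; tauto

lemma sg_const {h : V → ℝ} {S W : Submodule F V} (hSW : S ≤ W) (x : ℝ) (hx : ∀ v ∈ W, v ∉ S → h v = x) :
    sg h W = sg h S + ((Fintype.card F : ℝ)^(Module.finrank F W) 
      - (Fintype.card F : ℝ)^(Module.finrank F S)) * x := by
  rw [sg_add hSW, ← card_diff hSW, Finset.sum_congr rfl (g := fun _ => x)]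
  · simp
  · intro v hv; simp only [mem_filter, mem_univ, true_and] at hv; exact hx v hv.1 hv.2

lemma sg_bot (h : V → ℝ) : sg h (⊥ : Submodule F V) = 0 := by
  unfold sg; apply Finset.sum_eq_zero; intro v hv; simp at hv

lemma sg_const' {h : V → ℝ} {W : Submodule F V} (x : ℝ) (hx : ∀ v ∈ W, v ≠ 0 → h v = x) :
    sg h W = ((Fintype.card F : ℝ)^(Module.finrank F W) - 1) * x := by
  rw [sg_const (S := ⊥) bot_le x (by simpa using hx), sg_bot]; simp

lemma bbu (m e : ℕ) (U : Submodule F V) (hN : Module.finrank F V = Module.finrank F U + m + e)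
    (h : V → ℝ) (hh : ∀ (a : F) v, a ≠ 0 → h (a • v) = h v) (w : V) (hw : w ∉ U) :
    ∑ W ∈ Gr F V m with (w ∈ W ∧ W ⊓ U = ⊥), sg h W = 
      acnt (Fintype.card F) (Module.finrank F U) e m 1 * (((Fintype.card F : ℝ) - 1) * h w)
      + acnt (Fintype.card F) (Module.finrank F U) e m 2 * (sg h (⊤ : Submodule F V) 
          - sg h (U ⊔ Submodule.span F {w})) := by
  have hw0 : w ≠ 0 := by rintro rfl; exact hw U.zero_mem
  have h1 := dcount ((Gr F V m).filter (fun W => w ∈ W ∧ W ⊓ U = ⊥)) univ 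
    (fun W v => v ∈ W ∧ v ≠ 0) (fun _ => 1) h
  simp only [one_mul] at h1
  change ∑ W ∈ Gr F V m with (w ∈ W ∧ W ⊓ U = ⊥), sg h W = _ at h1
  rw [h1]
  have hT : sg h (⊤ : Submodule F V) - sg h (U ⊔ Submodule.span F {w}) 
      = ∑ v : V with v ∉ U ⊔ Submodule.span F {w}, h v := by
    rw [sg_add (h := h) (S := U ⊔ Submodule.span F {w}) (W := ⊤) le_top]; simp
  have hS : ((Fintype.card F : ℝ) - 1) * h w = sg h (Submodule.span F {w}) := by
    rw [sg_const' (h w), finrank_span_singleton hw0, pow_one]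
    intro v hv hv0
    obtain ⟨a, rfl⟩ := Submodule.mem_span_singleton.1 hv
    apply hh; rintro rfl; simp at hv0
  rw [hT, hS]
  unfold sg
  rw [Finset.sum_filter, Finset.sum_filter, Finset.mul_sum, Finset.mul_sum, ← Finset.sum_add_distrib]
  refine Finset.sum_congr rfl fun v _ => ?_
  by_cases hv0 : v = 0
  · subst hv0; simp
  have hwU : Submodule.span F {w} ⊓ U = ⊥ := by
    rw [inf_comm, ← disjoint_iff, Submodule.disjoint_span_singleton' hw0]; exact hw
  by_cases hvw : v ∈ Submodule.span F {w}
  · have : v ∈ U ⊔ Submodule.span F {w} := Submodule.mem_sup_right hvw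
    have h2 := cnt m e 1 U (Submodule.span F {w}) hN (finrank_span_singleton hw0) hwU
    have h3 : ((#{W ∈ ((Gr F V m).filter (fun W => w ∈ W ∧ W ⊓ U = ⊥)) | v ∈ W ∧ v ≠ 0} : ℕ) : ℝ) =
       (acnt (Fintype.card F) (Module.finrank F U) e m 1 : ℝ) := by
      rw [← h2]
      congr 2
      ext W
      simp only [mem_filter, Submodule.span_singleton_le_iff_mem]
      have : w ∈ W → v ∈ W := fun h => (Submodule.span_singleton_le_iff_mem w W).2 h hvw
      tauto
    simp only [sum_const, nsmul_eq_mul, mul_one]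
    rw [h3]
    simp [hvw, hv0, this]; ring
  · by_cases hvU : v ∈ U ⊔ Submodule.span F {w}
    · have : ((Gr F V m).filter (fun W => w ∈ W ∧ W ⊓ U = ⊥)).filter (fun W => v ∈ W ∧ v ≠ 0) = ∅ := by
        rw [Finset.filter_eq_empty_iff]
        rintro W hW ⟨h1, -⟩
        simp only [mem_filter] at hW
        obtain ⟨y, hy, s, hs, rfl⟩ := Submodule.mem_sup.1 hvU
        have hsW : s ∈ W := (Submodule.span_singleton_le_iff_mem w W).2 hW.2.1 hs
        have h3 : y ∈ W ⊓ U := ⟨by simpa using W.sub_mem h1 hsW, hy⟩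
        rw [hW.2.2] at h3
        have : y = 0 := by simpa using h3
        subst this
        exact hvw (by simpa using hs)
      rw [this]; simp [hvw, hvU]
    · have h2 := cnt m e 2 U (Submodule.span F {w} ⊔ Submodule.span F {v}) hN 
        (by rw [finrank_sup_span hvw, finrank_span_singleton hw0]) 
        (inf_sup_span hwU (by rwa [sup_comm]))
      have h3 : ((#{W ∈ ((Gr F V m).filter (fun W => w ∈ W ∧ W ⊓ U = ⊥)) | v ∈ W ∧ v ≠ 0} : ℕ) : ℝ) =
         (acnt (Fintype.card F) (Module.finrank F U) e m 2 : ℝ) := by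
        rw [← h2]
        congr 2
        ext W
        simp only [mem_filter, sup_le_iff, Submodule.span_singleton_le_iff_mem]
        tauto
      simp only [sum_const, nsmul_eq_mul, mul_one]
      rw [h3]
      simp [hvw, hvU]; ring

lemma ex_mid {T S : Submodule F V} (h : T ≤ S) : ∀ j, Module.finrank F T + j ≤ Module.finrank F S →
    ∃ R : Submodule F V, T ≤ R ∧ R ≤ S ∧ Module.finrank F R = Module.finrank F T + j := by
  intro j
  induction j with
  | zero => intro _; exact ⟨T, le_rfl, h, rfl⟩
  | succ j ih =>
    intro hj
    obtain ⟨R, h1, h2, h3⟩ := ih (by omega)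
    have : R ≠ S := by rintro rfl; omega
    obtain ⟨v, hv, hvR⟩ := SetLike.exists_of_lt (lt_of_le_of_ne h2 this)
    exact ⟨R ⊔ Submodule.span F {v}, le_sup_of_le_left h1, 
      sup_le h2 ((Submodule.span_singleton_le_iff_mem v S).2 hv), by rw [finrank_sup_span hvR]; omega⟩

lemma Elem (m i : ℕ) (g : Submodule F V → ℝ)
    (hB : ∀ S : Submodule F V, Module.finrank F S < i → ∑ U ∈ Gr F V m with S ≤ U, g U = 0) :
    ∀ (r : ℕ) (S T : Submodule F V), T ≤ S → Module.finrank F S ≤ i → 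
      Module.finrank F S = Module.finrank F T + r →
      ∑ U ∈ Gr F V m with U ⊓ S = T, g U = 
        (-1)^r * (Fintype.card F : ℝ)^(r.choose 2) * ∑ U ∈ Gr F V m with S ≤ U, g U := by
  intro r
  induction r with
  | zero =>
    intro S T hTS hi hr
    have : T = S := Submodule.eq_of_le_of_finrank_eq hTS (by omega)
    subst this
    simp
  | succ r ih =>
    intro S T hTS hi hr
    set q := Fintype.card F with hq
    have q1 : (1:ℝ) < q := q_gt
    set j := Module.finrank F T with hj
    obtain ⟨S0, hT0, h0S, hS0⟩ := ex_mid hTS r (by omega)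
    have hE0 : ∑ U ∈ Gr F V m with U ⊓ S0 = T, g U = 0 := by
      rw [ih S0 T hT0 (by omega) (by omega), hB S0 (by omega), mul_zero]
    have h1 := dcount ((Gr F V m).filter (fun U => U ⊓ S0 = T)) 
      ((univ : Finset V).filter (fun v => v ∈ S ∧ v ∉ S0)) (fun U v => v ∈ U) g (fun _ => 1)
    simp only [one_mul] at h1
    have hR : ∀ v ∈ (univ : Finset V).filter (fun v => v ∈ S ∧ v ∉ S0), 
        ∑ W ∈ (Gr F V m).filter (fun U => U ⊓ S0 = T) with v ∈ W, g W = 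
        (-1)^r * (q : ℝ)^(r.choose 2) * ∑ U ∈ Gr F V m with S ≤ U, g U := by
      intro v hv
      simp only [mem_filter, mem_univ, true_and] at hv
      have hvT : v ∉ T := fun h => hv.2 (hT0 h)
      have hSv : S0 ⊔ Submodule.span F {v} = S := by
        apply Submodule.eq_of_le_of_finrank_eq
        · exact sup_le h0S ((Submodule.span_singleton_le_iff_mem v S).2 hv.1)
        · rw [finrank_sup_span hv.2]; omega
      rw [← ih S (T ⊔ Submodule.span F {v}) 
        (sup_le hTS ((Submodule.span_singleton_le_iff_mem v S).2 hv.1)) hi 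
        (by rw [finrank_sup_span hvT]; omega)]
      refine Finset.sum_congr ?_ fun _ _ => rfl
      ext U
      simp only [mem_filter]
      rw [and_assoc]
      refine and_congr_right fun _ => ?_
      constructor
      · rintro ⟨h2, h3⟩
        apply le_antisymm
        · rintro x ⟨hxU, hxS⟩
          rw [SetLike.mem_coe, ← hSv] at hxS
          obtain ⟨s, hs, y, hy, rfl⟩ := Submodule.mem_sup.1 hxS
          have hyU := (Submodule.span_singleton_le_iff_mem v U).2 h3 hy
          have hsT : s ∈ U ⊓ S0 := ⟨by simpa using U.sub_mem hxU hyU, hs⟩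
          rw [h2] at hsT
          exact Submodule.add_mem_sup hsT hy
        · refine sup_le (le_inf (h2 ▸ inf_le_left) hTS) ?_
          rw [Submodule.span_singleton_le_iff_mem]; exact ⟨h3, hv.1⟩
      · intro h2
        have hvU : v ∈ U ⊓ S := by 
          rw [h2]; exact Submodule.mem_sup_right (Submodule.mem_span_singleton_self v)
        refine ⟨?_, hvU.1⟩
        apply le_antisymm
        · rintro x ⟨hxU, hxS⟩
          have hx : x ∈ U ⊓ S := ⟨hxU, h0S hxS⟩
          rw [h2] at hx
          obtain ⟨s, hs, y, hy, rfl⟩ := Submodule.mem_sup.1 hx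
          obtain ⟨a, rfl⟩ := Submodule.mem_span_singleton.1 hy
          have : a • v ∈ S0 := by simpa using S0.sub_mem hxS (hT0 hs)
          by_cases ha : a = 0
          · subst ha; simpa using hs
          · exact absurd ((Submodule.smul_mem_iff _ ha).1 this) hv.2
        · refine le_inf ?_ hT0
          exact (le_sup_left.trans h2.ge).trans inf_le_left
    rw [Finset.sum_congr rfl hR, Finset.sum_const, nsmul_eq_mul, card_diff h0S] at h1
    have hL : ∀ U ∈ (Gr F V m).filter (fun U => U ⊓ S0 = T), 
        g U * ∑ v ∈ (univ : Finset V).filter (fun v => v ∈ S ∧ v ∉ S0) with v ∈ U, (1:ℝ)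
        = ((q:ℝ)^(j+1) - (q:ℝ)^j) * (g U - if U ⊓ S = T then g U else 0) := by
      intro U hU
      simp only [mem_filter] at hU
      have hTU : T ≤ U ⊓ S := le_inf (hU.2 ▸ inf_le_left) hTS
      have e1 : ((univ : Finset V).filter (fun v => v ∈ S ∧ v ∉ S0)).filter (fun v => v ∈ U) = 
          (univ : Finset V).filter (fun v => v ∈ U ⊓ S ∧ v ∉ T) := by
        ext v
        simp only [mem_filter, mem_univ, true_and, ← hU.2, Submodule.mem_inf]
        tauto
      rw [e1, Finset.sum_const, nsmul_eq_mul, mul_one, card_diff hTU]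
      split_ifs with h3
      · rw [h3]; ring
      · have : Module.finrank F (U ⊓ S : Submodule F V) = j + 1 := by
          obtain ⟨v, hv, hvT⟩ := SetLike.exists_of_lt (lt_of_le_of_ne hTU (Ne.symm h3))
          have a1 : T ⊔ Submodule.span F {v} ≤ U ⊓ S := 
            sup_le hTU ((Submodule.span_singleton_le_iff_mem v _).2 hv)
          have a2 := Submodule.finrank_mono a1
          rw [finrank_sup_span hvT] at a2
          have a3 := Submodule.finrank_sup_add_finrank_inf_eq (U ⊓ S) S0
          have a4 : U ⊓ S ⊓ S0 = T := by rw [inf_assoc, inf_eq_right.2 h0S, hU.2]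
          rw [a4] at a3
          have a5 := Submodule.finrank_mono (sup_le (inf_le_right) h0S : U ⊓ S ⊔ S0 ≤ S)
          omega
        rw [this]; ring
    rw [Finset.sum_congr rfl hL, ← Finset.mul_sum, Finset.sum_sub_distrib, hE0, ← Finset.sum_filter,
      Finset.filter_filter] at h1
    have e2 : (Gr F V m).filter (fun U => U ⊓ S0 = T ∧ U ⊓ S = T) = 
        (Gr F V m).filter (fun U => U ⊓ S = T) := by
      ext U
      simp only [mem_filter, and_congr_right_iff, and_iff_right_iff_imp]
      intro _ h
      apply le_antisymm
      · exact (inf_le_inf_left U h0S).trans h.le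
      · exact le_inf (h ▸ inf_le_left) hT0
    rw [e2, hr, hS0] at h1
    have hne : (q:ℝ)^j * ((q:ℝ) - 1) ≠ 0 := by
      have : (q:ℝ) - 1 > 0 := by linarith
      positivity
    apply mul_left_cancel₀ hne
    rw [Nat.choose_succ_succ' r 1, Nat.choose_one_right]
    linear_combination -h1

lemma acnt_lt (q e m i : ℕ) (hq : 1 < q) (h2 : 2 ≤ i) (hi : i ≤ m) :
    acnt q m e m i * q^(i.choose 2) < acnt q m e m 1 := by
  unfold acnt
  rw [if_pos hi, if_pos (by omega)]
  have hmono : ∀ d t, gbinom q (e+t) t ≤ gbinom q (e+(t+d)) (t+d) := by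
    intro d t
    induction d with
    | zero => exact le_rfl
    | succ d ih => exact ih.trans (gb_mono q (e+(t+d)) (t+d))
  have h1 := hmono (i-1) (m-i)
  rw [show m - i + (i-1) = m - 1 by omega] at h1
  have hp := gb_pos q e (m-1)
  have hc : i.choose 2 < m * (i-1) := by
    rw [Nat.choose_two_right]
    have : i * (i-1) / 2 < i * (i-1) := Nat.div_lt_self (Nat.mul_pos (by omega) (by omega)) (by omega)
    exact this.trans_le (Nat.mul_le_mul_right _ hi)
  have h3 : q^(m*(m-i)) * q^(i.choose 2) < q^(m*(m-1)) := by
    rw [← pow_add]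
    apply Nat.pow_lt_pow_right hq
    have : m*(m-1) = m*(m-i) + m*(i-1) := by rw [← Nat.mul_add]; congr 1; omega
    omega
  calc _ = q^(m*(m-i)) * q^(i.choose 2) * gbinom q (e+(m-i)) (m-i) := by ring
    _ ≤ q^(m*(m-i)) * q^(i.choose 2) * gbinom q (e+(m-1)) (m-1) := Nat.mul_le_mul_left _ h1
    _ < _ := Nat.mul_lt_mul_of_pos_right h3 hp

lemma vanish (m e : ℕ) (hm : 1 ≤ m) (hN : Module.finrank F V = m + m + e) (g : Submodule F V → ℝ) (C : ℝ)
    (hg1 : ∀ v : V, v ≠ 0 → ∑ U ∈ Gr F V m with v ∈ U, g U = 0)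
    (hK : ∀ W ∈ Gr F V m, ∑ U ∈ Gr F V m with U ⊓ W = ⊥, g U 
      = -(acnt (Fintype.card F) m e m 1 : ℝ) * g W + C) : ∀ W ∈ Gr F V m, g W = 0 := by
  set q := Fintype.card F with hq
  have q1 : (1:ℝ) < q := q_gt
  have hsum : ∑ U ∈ Gr F V m, g U = 0 := by
    have h1 := dcount (Gr F V m) univ (fun U v => v ∈ U ∧ v ∉ (⊥ : Submodule F V)) g (fun _ => 1)
    have h2 : ∀ U ∈ Gr F V m, g U * ∑ v : V with (v ∈ U ∧ v ∉ (⊥ : Submodule F V)), (1:ℝ) 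
        = ((q:ℝ)^m - 1) * g U := by
      intro U hU
      rw [mem_Gr] at hU
      rw [Finset.sum_const, nsmul_eq_mul, card_diff bot_le, hU]; simp [mul_comm, ← hq]
    rw [Finset.sum_congr rfl h2, ← Finset.mul_sum] at h1
    rw [Finset.sum_eq_zero (s := univ)] at h1
    · have : (1:ℝ) < (q:ℝ)^m := one_lt_pow₀ q1 (by omega)
      rcases mul_eq_zero.1 h1 with h | h
      · linarith
      · exact h
    · intro v _
      rw [one_mul]
      by_cases hv : v = 0
      · simp [hv]
      · rw [← hg1 v hv]; simp [hv]
  have hdc : ∀ (i : ℕ) (S : Submodule F V), Module.finrank F S = i → 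
      ∑ W ∈ Gr F V m with S ≤ W, ∑ U ∈ Gr F V m with U ⊓ W = ⊥, g U
      = acnt q m e m i * ∑ U ∈ Gr F V m with U ⊓ S = ⊥, g U := by
    intro i S hS
    have h1 := dcount ((Gr F V m).filter (fun W => S ≤ W)) (Gr F V m) (fun W U => U ⊓ W = ⊥) (fun _ => 1) g
    simp only [one_mul] at h1
    rw [h1, Finset.sum_filter, Finset.mul_sum]
    refine Finset.sum_congr rfl fun U hU => ?_
    rw [mem_Gr] at hU
    rw [Finset.sum_const, nsmul_eq_mul, mul_one, Finset.filter_filter]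
    split_ifs with h
    · have := cnt m e i U S (by omega) hS (by rwa [inf_comm])
      rw [hU] at this
      rw [← this, mul_comm]
      congr 3
      ext W; rw [mem_filter, mem_filter, inf_comm]
    · have : (Gr F V m).filter (fun W => S ≤ W ∧ U ⊓ W = ⊥) = ∅ := by
        rw [Finset.filter_eq_empty_iff]
        rintro W - ⟨h1, h2⟩
        exact h (le_bot_iff.1 ((inf_le_inf_left U h1).trans h2.le))
      rw [this]; simp
  have hC : (#(Gr F V m) : ℝ) * C = 0 := by
    have h1 := hdc 0 ⊥ (by simp)
    simp only [bot_le, inf_bot_eq, Finset.filter_true, hsum, mul_zero] at h1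
    rw [Finset.sum_congr rfl hK, Finset.sum_add_distrib, ← Finset.mul_sum, hsum] at h1
    simpa using h1
  have hK' : ∀ W ∈ Gr F V m, ∑ U ∈ Gr F V m with U ⊓ W = ⊥, g U 
      = -(acnt q m e m 1 : ℝ) * g W := by
    intro W hW
    have : C = 0 := by
      rcases mul_eq_zero.1 hC with h | h
      · rw [Nat.cast_eq_zero, Finset.card_eq_zero] at h
        rw [h] at hW; simp at hW
      · exact h
    rw [hK W hW, this, add_zero]
  have main : ∀ i ≤ m, ∀ S : Submodule F V, Module.finrank F S = i → 
      ∑ U ∈ Gr F V m with S ≤ U, g U = 0 := by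
    intro i
    induction i using Nat.strong_induction_on with
    | _ i ih =>
    intro him S hS
    rcases Nat.lt_or_ge i 2 with hi | hi
    · interval_cases i
      · have : S = ⊥ := Submodule.finrank_eq_zero.1 hS
        subst this
        simpa using hsum
      · obtain ⟨v, hv, hv0⟩ := Submodule.exists_mem_ne_zero_of_ne_bot 
          (show S ≠ ⊥ by rintro rfl; simp at hS)
        have : Submodule.span F {v} = S := by
          apply Submodule.eq_of_le_of_finrank_eq
          · rwa [Submodule.span_singleton_le_iff_mem]
          · rw [hS, finrank_span_singleton hv0]
        rw [← hg1 v hv0, ← this]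
        simp only [Submodule.span_singleton_le_iff_mem]
    · have h1 := hdc i S hS
      have h2 := Elem m i g (fun S' hS' => ih _ hS' (by omega) S' rfl) i S ⊥ bot_le hS.le (by simp [hS])
      rw [h2] at h1
      rw [Finset.sum_congr rfl (fun W hW => hK' W (Finset.mem_filter.1 hW).1), ← Finset.mul_sum] at h1
      have hlt := acnt_lt q e m i (by exact_mod_cast q1) hi him
      have hlt' : (acnt q m e m i : ℝ) * (q:ℝ)^(i.choose 2) < acnt q m e m 1 := by exact_mod_cast hlt
      have h0 : (0:ℝ) ≤ (acnt q m e m i : ℝ) * (q:ℝ)^(i.choose 2) := by positivity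
      by_contra hne
      rw [← hq] at h1
      have h3 : -(acnt q m e m 1 : ℝ) = (-1)^i * ((acnt q m e m i : ℝ) * (q:ℝ)^(i.choose 2)) := by
        apply mul_right_cancel₀ hne
        linear_combination h1
      rcases neg_one_pow_eq_or ℝ i with h | h <;> rw [h] at h3 <;> linarith
  intro W hW
  rw [mem_Gr] at hW
  have h1 := main m le_rfl W hW
  have : (Gr F V m).filter (fun U => W ≤ U) = {W} := by
    ext U
    simp only [mem_filter, mem_Gr, mem_singleton]
    constructor
    · rintro ⟨h1, h2⟩
      exact (Submodule.eq_of_le_of_finrank_eq h2 (by omega)).symm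
    · rintro rfl; exact ⟨hW, le_rfl⟩
  rw [this] at h1
  simpa using h1

lemma acnt_lt0 (q e m : ℕ) (hq : 0 < q) (hm : 1 ≤ m) (he : 1 ≤ e) :
    acnt q 0 e m 2 < acnt q 0 e m 1 := by
  rcases Nat.lt_or_ge m 2 with h | h
  · have := acnt_pos q 0 e m 1 hq hm
    have h0 : acnt q 0 e m 2 = 0 := by unfold acnt; rw [if_neg (by omega)]
    omega
  · obtain ⟨k, rfl⟩ := Nat.exists_eq_add_of_le' h
    obtain ⟨e', rfl⟩ := Nat.exists_eq_add_of_le' he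
    unfold acnt
    rw [if_pos h, if_pos hm]
    simp only [zero_mul, pow_zero, one_mul, Nat.add_sub_cancel]
    rw [show k + 2 - 1 = k + 1 by omega, show e' + 1 + (k+1) = (e' + 1 + k) + 1 by omega]
    simp only [gbinom]
    have := gb_pos q e' (k+1)
    rw [show e' + (k+1) = e' + 1 + k by omega] at this
    have : 0 < q^(k+1) * gbinom q (e'+1+k) (k+1) := by positivity
    omega

lemma bb (m e : ℕ) (hN : Module.finrank F V = m + e)
    (h : V → ℝ) (hh : ∀ (a : F) v, a ≠ 0 → h (a • v) = h v) (w : V) (hw : w ≠ 0) :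
    ∑ W ∈ Gr F V m with w ∈ W, sg h W = 
      ((acnt (Fintype.card F) 0 e m 1 : ℝ) - acnt (Fintype.card F) 0 e m 2) * (((Fintype.card F : ℝ) - 1) * h w)
      + acnt (Fintype.card F) 0 e m 2 * sg h (⊤ : Submodule F V) := by
  have h1 := bbu m e (⊥ : Submodule F V) (by simpa using hN) h hh w (by simpa using hw)
  have hS : sg h (Submodule.span F {w}) = ((Fintype.card F : ℝ) - 1) * h w := by
    rw [sg_const' (h w), finrank_span_singleton hw, pow_one]
    intro v hv hv0
    obtain ⟨a, rfl⟩ := Submodule.mem_span_singleton.1 hv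
    apply hh; rintro rfl; simp at hv0
  simp only [inf_bot_eq, and_true, finrank_bot, bot_sup_eq, hS] at h1
  rw [h1]; ring

lemma cnt1 (m e : ℕ) (hN : Module.finrank F V = m + e) (w : V) (hw : w ≠ 0) :
    (#{W ∈ Gr F V m | w ∈ W} : ℝ) = acnt (Fintype.card F) 0 e m 1 := by
  have h1 := cnt m e 1 (⊥ : Submodule F V) (Submodule.span F {w}) (by simpa using hN) 
    (finrank_span_singleton hw) (by simp)
  simpa using h1

lemma deg1 (m e : ℕ) (hm : 1 ≤ m) (hN : Module.finrank F V = m + m + e) (f : Submodule F V → ℝ) 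
    (d : V → ℝ) (hd : ∀ v, d v = ∑ U ∈ Gr F V m with v ∈ U, f U)
    (hK : ∀ W ∈ Gr F V m, ∑ U ∈ Gr F V m with U ⊓ W = ⊥, f U 
      = (acnt (Fintype.card F) m e m 1 : ℝ) * (1 - f W)) : 
    ∃ t u : ℝ, 0 < t ∧ ∀ W ∈ Gr F V m, f W = t * sg d W + u := by
  set q := Fintype.card F with hq
  have q1 : (1:ℝ) < q := q_gt
  have q0 : 0 < q := by exact_mod_cast zero_lt_one.trans q1
  have hh : ∀ (a : F) v, a ≠ 0 → d (a • v) = d v := by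
    intro a v ha
    rw [hd, hd]
    simp only [Submodule.smul_mem_iff _ ha]
  set l1 : ℝ := ((acnt q 0 (m+e) m 1 : ℕ) : ℝ) with hl1
  set l2 : ℝ := ((acnt q 0 (m+e) m 2 : ℕ) : ℝ) with hl2
  set c : ℝ := ((acnt q m e m 1 : ℕ) : ℝ) with hc
  have hl : l2 < l1 := by
    have := acnt_lt0 q (m+e) m q0 hm (by omega)
    rw [hl1, hl2]; exact_mod_cast this
  have hl1p : 0 < l1 := by
    have := acnt_pos q 0 (m+e) m 1 q0 hm
    rw [hl1]; exact_mod_cast this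
  set D := sg d (⊤ : Submodule F V) with hD
  have htp : 0 < (l1 - l2) * ((q:ℝ) - 1) := mul_pos (by linarith) (by linarith)
  set t := ((l1 - l2) * ((q:ℝ) - 1))⁻¹ with ht
  have htt : t * ((l1 - l2) * ((q:ℝ) - 1)) = 1 := inv_mul_cancel₀ htp.ne'
  set u := - t * l2 * D / l1 with hu
  have huu : u * l1 = - t * l2 * D := by rw [hu]; field_simp
  refine ⟨t, u, by positivity, ?_⟩
  set k : ℝ := ((acnt q m e m 0 : ℕ) : ℝ) with hk
  have := vanish m e hm hN (fun W => f W - t * sg d W - u) (c - t * c * D - u * k - c * u) ?_ ?_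
  · intro W hW
    have := this W hW
    linarith
  · intro v hv
    simp only [Finset.sum_sub_distrib, ← Finset.mul_sum]
    rw [← hd, bb m (m+e) (by omega) d hh v hv, Finset.sum_const, nsmul_eq_mul, cnt1 m (m+e) (by omega) v hv,
      ← hq, ← hl1, ← hl2, ← hD]
    linear_combination (-d v) * htt - huu
  · intro W hW
    have hW' := hW
    rw [mem_Gr] at hW'
    simp only [Finset.sum_sub_distrib, ← Finset.mul_sum]
    rw [hK W hW, Finset.sum_const, nsmul_eq_mul]
    have h0 := cnt m e 0 W ⊥ (by omega) (by simp) (by simp)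
    simp only [bot_le, true_and, hW'] at h0
    rw [h0, ← hq, ← hk, ← hc]
    have h1 : ∑ U ∈ Gr F V m with U ⊓ W = ⊥, sg d U = c * (D - sg d W) := by
      have h1 := dcount ((Gr F V m).filter (fun U => U ⊓ W = ⊥)) univ 
        (fun U v => v ∈ U ∧ v ≠ 0) (fun _ => 1) d
      simp only [one_mul] at h1
      change ∑ U ∈ Gr F V m with U ⊓ W = ⊥, sg d U = _ at h1
      rw [h1, hD, sg_add (h := d) (S := W) le_top, add_sub_cancel_left, Finset.mul_sum, Finset.sum_filter]
      refine Finset.sum_congr rfl fun v _ => ?_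
      simp only [Submodule.mem_top, true_and]
      by_cases hv : v ∈ W
      · rw [if_neg (by simpa using hv)]
        have : ((Gr F V m).filter (fun U => U ⊓ W = ⊥)).filter (fun U => v ∈ U ∧ v ≠ 0) = ∅ := by
          rw [Finset.filter_eq_empty_iff]
          rintro U hU ⟨h1, h2⟩
          simp only [mem_filter] at hU
          have : v ∈ U ⊓ W := ⟨h1, hv⟩
          rw [hU.2] at this
          exact h2 (by simpa using this)
        rw [this]; simp
      · rw [if_pos hv]
        have hv0 : v ≠ 0 := by rintro rfl; exact hv W.zero_mem
        have h2 := cnt m e 1 W (Submodule.span F {v}) (by omega) (finrank_span_singleton hv0) (by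
          rw [inf_comm, ← disjoint_iff, Submodule.disjoint_span_singleton' hv0]; exact hv)
        rw [hW', ← hq, ← hc] at h2
        rw [← h2, Finset.sum_const, nsmul_eq_mul, mul_one, mul_comm, Finset.filter_filter]
        congr 3
        ext U
        rw [mem_filter, mem_filter, Submodule.span_singleton_le_iff_mem]
        tauto
    rw [h1]; ring

/-- `d` constant on `W` from constancy of hyperplane sums -/
lemma const_of_hyp (m : ℕ) (hm : 1 ≤ m) (hN : Module.finrank F V = m + 1) (h : V → ℝ) 
    (hh : ∀ (a : F) v, a ≠ 0 → h (a • v) = h v) (x : ℝ) (hx : ∀ A ∈ Gr F V m, sg h A = x) :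
    ∃ y, ∀ v : V, v ≠ 0 → h v = y := by
  set q := Fintype.card F with hq
  have q1 : (1:ℝ) < q := q_gt
  have q0 : 0 < q := by exact_mod_cast zero_lt_one.trans q1
  have hl : (acnt q 0 1 m 2 : ℝ) < acnt q 0 1 m 1 := by
    exact_mod_cast acnt_lt0 q 1 m q0 hm le_rfl
  have hp : 0 < ((acnt q 0 1 m 1 : ℝ) - acnt q 0 1 m 2) * ((q:ℝ) - 1) := 
    mul_pos (by linarith) (by linarith)
  refine ⟨(acnt q 0 1 m 1 * x - acnt q 0 1 m 2 * sg h (⊤ : Submodule F V)) 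
    / (((acnt q 0 1 m 1 : ℝ) - acnt q 0 1 m 2) * ((q:ℝ) - 1)), ?_⟩
  intro v hv
  have h1 := bb m 1 hN h hh v hv
  rw [Finset.sum_congr rfl (fun A hA => hx A (Finset.mem_filter.1 hA).1), Finset.sum_const, nsmul_eq_mul,
    cnt1 m 1 hN v hv, ← hq] at h1
  rw [eq_div_iff hp.ne']
  linear_combination -h1

lemma const_of_hyp' (m : ℕ) (hm : 1 ≤ m) (W : Submodule F V) (hN : Module.finrank F W = m + 1) (h : V → ℝ) 
    (hh : ∀ (a : F) v, a ≠ 0 → h (a • v) = h v) (x : ℝ) 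
    (hx : ∀ A ≤ W, Module.finrank F A = m → sg h A = x) :
    ∃ y, ∀ v ∈ W, v ≠ 0 → h v = y := by
  obtain ⟨y, hy⟩ := const_of_hyp (F := F) (V := W) m hm hN (fun v => h v) (fun a v ha => hh a v ha) x (by
    intro A hA
    rw [mem_Gr] at hA
    rw [← hx (A.map W.subtype) (Submodule.map_subtype_le W A) 
      (by rw [Submodule.finrank_map_subtype_eq, hA])]
    unfold sg
    refine Finset.sum_bij (fun v _ => (v : V)) ?_ ?_ ?_ ?_
    · intro v hv
      simp at hv ⊢
      exact hv
    · intro a _ b _ hab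
      exact Subtype.ext hab
    · intro b hb
      simp at hb
      obtain ⟨⟨hbW, hbA⟩, hb0⟩ := hb
      exact ⟨⟨b, hbW⟩, by simp [hbA, hb0], rfl⟩
    · intro _ _; rfl)
  exact ⟨y, fun v hv hv0 => hy ⟨v, hv⟩ (by simpa using hv0)⟩

lemma ex_disj (m e : ℕ) (hN : Module.finrank F V = m + m + e) (W : Submodule F V) 
    (hW : Module.finrank F W = m) : ∃ U : Submodule F V, Module.finrank F U = m ∧ U ⊓ W = ⊥ := by
  have h0 := cnt m e 0 W ⊥ (by omega) (by simp) (by simp)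
  have hp := acnt_pos (Fintype.card F) (Module.finrank F W) e m 0 Fintype.card_pos (by omega)
  rw [Nat.cast_inj] at h0
  rw [← h0, Finset.card_pos] at hp
  obtain ⟨U, hU⟩ := hp
  simp only [mem_filter, mem_Gr] at hU
  exact ⟨U, hU.1, hU.2.2⟩

lemma sup_span_eq {W : Submodule F V} {p v : V} (hv : v ∈ W ⊔ Submodule.span F {p}) (hvW : v ∉ W) :
    W ⊔ Submodule.span F {v} = W ⊔ Submodule.span F {p} := by
  have hp : p ∉ W := by
    intro h
    rw [sup_eq_left.2 ((Submodule.span_singleton_le_iff_mem p W).2 h)] at hv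
    exact hvW hv
  apply Submodule.eq_of_le_of_finrank_eq
  · exact sup_le le_sup_left ((Submodule.span_singleton_le_iff_mem v _).2 hv)
  · rw [finrank_sup_span hp, finrank_sup_span hvW]

lemma struct_aux (m e : ℕ) (hm : 2 ≤ m) (hN : Module.finrank F V = m + m + e) 
    (L : Finset (Submodule F V)) (hLG : ∀ W ∈ L, Module.finrank F W = m)
    (hint : ∀ W ∈ L, ∀ W' ∈ L, W ⊓ W' ≠ ⊥)
    (hmax : ∀ W : Submodule F V, Module.finrank F W = m → W ∉ L → ∃ U ∈ L, U ⊓ W = ⊥)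
    (d : V → ℝ) (hd : ∀ v, d v = (#{U ∈ L | v ∈ U} : ℝ)) (s0 s1 : ℝ) (hs : s0 < s1)
    (hs1 : ∀ W ∈ L, sg d W = s1) 
    (hs0 : ∀ W : Submodule F V, Module.finrank F W = m → W ∉ L → sg d W = s0) :
    (∃ P : Submodule F V, Module.finrank F P = 1 ∧ ∀ W : Submodule F V, Module.finrank F W = m → (W ∈ L ↔ P ≤ W)) ∨
    (e = 0 ∧ ∃ H : Submodule F V, Module.finrank F H + 1 = Module.finrank F V ∧ 
      ∀ W : Submodule F V, Module.finrank F W = m → (W ∈ L ↔ W ≤ H)) := by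
  set q := Fintype.card F with hq
  have q1 : (1:ℝ) < q := q_gt
  have q0 : 0 < q := by exact_mod_cast zero_lt_one.trans q1
  have hh : ∀ (a : F) v, a ≠ 0 → d (a • v) = d v := by
    intro a v ha
    rw [hd, hd]
    simp only [Submodule.smul_mem_iff _ ha]
  -- nonempty
  obtain ⟨W0, hW0⟩ : ∃ W, W ∈ L := by
    obtain ⟨R, -, -, hR⟩ := ex_mid (F := F) (V := V) (T := ⊥) (S := ⊤) bot_le m (by simp; omega)
    simp only [finrank_bot, zero_add] at hR
    by_contra hne
    push Not at hne
    obtain ⟨U, hU, -⟩ := hmax R hR (hne R)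
    exact hne U hU
  have hdis : ∀ W ∈ L, ∃ U : Submodule F V, Module.finrank F U = m ∧ U ∉ L ∧ U ⊓ W = ⊥ := by
    intro W hW
    obtain ⟨U, hU, hUW⟩ := ex_disj m e hN W (hLG W hW)
    exact ⟨U, hU, fun h => hint U h W hW hUW, hUW⟩
  have D1 : ∀ W ∈ L, ∀ p p', p ∉ W → p' ∈ W ⊔ Submodule.span F {p} → p' ∉ W → d p' = d p := by
    intro W hW p p' hp hp'T hp'
    have hWm := hLG W hW
    have key : ∀ w : V, w ∉ W → (acnt q m e m 1 : ℝ) * s0 = 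
        acnt q m e m 1 * (((q : ℝ) - 1) * d w)
        + acnt q m e m 2 * (sg d (⊤ : Submodule F V) 
          - sg d (W ⊔ Submodule.span F {w})) := by
      intro w hw
      have hw0 : w ≠ 0 := by rintro rfl; exact hw W.zero_mem
      have h1 := bbu m e W (by omega) d hh w hw
      rw [hWm, ← hq] at h1
      rw [← h1]
      have h2 := cnt m e 1 W (Submodule.span F {w}) (by omega) (finrank_span_singleton hw0) (by
          rw [inf_comm, ← disjoint_iff, Submodule.disjoint_span_singleton' hw0]; exact hw)
      rw [hWm, ← hq] at h2
      simp only [Submodule.span_singleton_le_iff_mem] at h2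
      rw [← h2, Finset.sum_congr rfl (g := fun _ => s0)]
      · simp
      · intro U hU
        simp only [mem_filter, mem_Gr] at hU
        exact hs0 U hU.1 (fun h => hint U h W hW hU.2.2)
    have k1 := key p hp
    have k2 := key p' hp'
    rw [sup_span_eq hp'T hp'] at k2
    have hpos : (0:ℝ) < acnt q m e m 1 := by exact_mod_cast acnt_pos q m e m 1 q0 (by omega)
    have hne : (acnt q m e m 1 : ℝ) * ((q:ℝ) - 1) ≠ 0 := (mul_pos hpos (by linarith)).ne'
    apply mul_left_cancel₀ hne
    linear_combination k1 - k2
  have D2 : ∀ W ∈ L, (∃ x, ∀ v, v ∉ W → d v = x) ∨ (∃ y, ∀ v ∈ W, v ≠ 0 → d v = y) := by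
    intro W hW
    have hWm := hLG W hW
    by_cases hP : ∀ p p', p ∉ W → p' ∉ W → d p ≤ d p'
    · left
      by_cases hex : ∃ p, p ∉ W
      · obtain ⟨p, hp⟩ := hex
        exact ⟨d p, fun v hv => le_antisymm (hP v p hv hp) (hP p v hp hv)⟩
      · push Not at hex
        exact ⟨0, fun v hv => absurd (hex v) hv⟩
    · right
      push Not at hP
      obtain ⟨p', p, hp', hp, hlt⟩ := hP
      have key : ∀ A ≤ W, Module.finrank F A = m - 1 → ∀ w, w ∉ W → 
          (sg d A + ((q:ℝ)^m - (q:ℝ)^(m-1)) * d w = s0 ∨ 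
          sg d A + ((q:ℝ)^m - (q:ℝ)^(m-1)) * d w = s1) := by
        intro A hA hAm w hw
        have hwA : w ∉ A := fun h => hw (hA h)
        have hfr : Module.finrank F (A ⊔ Submodule.span F {w} : Submodule F V) = m := by
          rw [finrank_sup_span hwA]; omega
        have h1 := sg_const (h := d) (S := A) (W := A ⊔ Submodule.span F {w}) le_sup_left (d w) (by
          intro v hv hvA
          have hvT : v ∈ W ⊔ Submodule.span F {w} := sup_le_sup_right hA _ hv
          apply D1 W hW w v hw hvT
          intro hvW
          apply hw
          have h2 := sup_span_eq hv hvA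
          have h3 : w ∈ A ⊔ Submodule.span F {v} := by
            rw [h2]; exact Submodule.mem_sup_right (Submodule.mem_span_singleton_self w)
          exact sup_le hA ((Submodule.span_singleton_le_iff_mem v W).2 hvW) h3)
        rw [hfr, hAm, ← hq] at h1
        rw [← h1]
        by_cases hin : A ⊔ Submodule.span F {w} ∈ L
        · right; exact hs1 _ hin
        · left; exact hs0 _ hfr hin
      apply const_of_hyp' (m-1) (by omega) W (by omega) d hh (s0 - ((q:ℝ)^m - (q:ℝ)^(m-1)) * d p)
      intro A hA hAm
      have hg : (0:ℝ) < (q:ℝ)^m - (q:ℝ)^(m-1) := by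
        have := pow_lt_pow_right₀ q1 (show m - 1 < m by omega)
        linarith
      have hlt' := mul_lt_mul_of_pos_left hlt hg
      rcases key A hA hAm p hp with h1 | h1 <;> rcases key A hA hAm p' hp' with h2 | h2 <;> linarith
  have hqm : (1:ℝ) < (q:ℝ)^m := one_lt_pow₀ q1 (by omega)
  by_cases hall : ∀ W ∈ L, ∃ x, ∀ v, v ∉ W → d v = x
  · left
    by_cases hp : ∃ p : V, p ≠ 0 ∧ ∀ W ∈ L, p ∈ W
    · obtain ⟨p, hp0, hpL⟩ := hp
      refine ⟨Submodule.span F {p}, finrank_span_singleton hp0, fun W hW => ?_⟩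
      rw [Submodule.span_singleton_le_iff_mem]
      refine ⟨fun h => hpL W h, fun h => ?_⟩
      by_contra hWL
      obtain ⟨U, hU, hUW⟩ := hmax W hW hWL
      have : p ∈ U ⊓ W := ⟨hpL U hU, h⟩
      rw [hUW] at this
      exact hp0 (by simpa using this)
    · exfalso
      push Not at hp
      have hqN : (q:ℝ)^m < (q:ℝ)^(m+m+e) := pow_lt_pow_right₀ q1 (by omega)
      have hδ : ∀ v : V, v ≠ 0 → 
          d v = (sg d (⊤ : Submodule F V) - s1) / ((q:ℝ)^(m+m+e) - (q:ℝ)^m) := by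
        intro v hv
        obtain ⟨W, hW, hvW⟩ := hp v hv
        obtain ⟨x, hx⟩ := hall W hW
        have h1 := sg_const (h := d) (S := W) (W := ⊤) le_top x (fun v _ h => hx v h)
        rw [finrank_top, hN, hLG W hW, hs1 W hW, ← hq] at h1
        rw [hx v hvW, eq_div_iff (by linarith)]
        linear_combination -h1
      obtain ⟨U, hU, hUL, -⟩ := hdis W0 hW0
      have h1 := sg_const' (W := W0) _ (fun v _ h => hδ v h)
      have h2 := sg_const' (W := U) _ (fun v _ h => hδ v h)
      rw [hLG W0 hW0, hs1 W0 hW0] at h1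
      rw [hU, hs0 U hU hUL] at h2
      linarith
  · right
    push Not at hall
    obtain ⟨W1, hW1, hW1P⟩ := hall
    have hH1 : ∃ y, ∀ v ∈ W1, v ≠ 0 → d v = y := by
      rcases D2 W1 hW1 with ⟨x, hx⟩ | h
      · obtain ⟨v, hv, hne⟩ := hW1P x
        exact absurd (hx v hv) hne
      · exact h
    have hH : ∀ W ∈ L, ∃ y, ∀ v ∈ W, v ≠ 0 → d v = y := by
      intro W hW
      rcases D2 W hW with ⟨x, hx⟩ | h
      · by_cases hWW : W1 = W
        · rw [← hWW]; exact hH1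
        · exfalso
          obtain ⟨y, hy⟩ := hH1
          obtain ⟨v, hv, hvW⟩ : ∃ v ∈ W1, v ∉ W := by
            by_contra hcon
            push Not at hcon
            exact hWW (Submodule.eq_of_le_of_finrank_eq hcon (by rw [hLG W hW, hLG W1 hW1]))
          have hv0 : v ≠ 0 := by rintro rfl; exact hvW W.zero_mem
          have hxy : x = y := by rw [← hx v hvW, hy v hv hv0]
          obtain ⟨U, hU, hUL, hUW⟩ := hdis W hW
          have h1 := sg_const' (h := d) (W := W1) y hy
          have h2 := sg_const' (h := d) (W := U) y (by
            intro v hv hv0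
            rw [← hxy]
            apply hx
            intro hvW
            have : v ∈ U ⊓ W := ⟨hv, hvW⟩
            rw [hUW] at this
            exact hv0 (by simpa using this))
          rw [hLG W1 hW1, hs1 W1 hW1] at h1
          rw [hU, hs0 U hU hUL] at h2
          linarith
      · exact h
    set η := s1 / ((q:ℝ)^m - 1) with hη
    have hηm : ((q:ℝ)^m - 1) * η = s1 := by
      rw [hη]; field_simp [show ((q:ℝ)^m - 1) ≠ 0 by linarith]
    have hHη : ∀ W ∈ L, ∀ v ∈ W, v ≠ 0 → d v = η := by
      intro W hW v hv hv0
      obtain ⟨y, hy⟩ := hH W hW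
      have h1 := sg_const' (h := d) (W := W) y hy
      rw [hLG W hW, hs1 W hW, ← hq] at h1
      rw [hy v hv hv0, hη, eq_div_iff (by linarith)]
      linear_combination -h1
    have hpos : ∀ v, 0 < d v ↔ ∃ W ∈ L, v ∈ W := by
      intro v
      rw [hd, Nat.cast_pos, Finset.card_pos]
      constructor
      · rintro ⟨W, hW⟩; exact ⟨W, by simpa using hW⟩
      · rintro ⟨W, h1, h2⟩; exact ⟨W, by simp [h1, h2]⟩
    let X : Submodule F V :=
      { carrier := {v | ∃ W ∈ L, v ∈ W}
        zero_mem' := ⟨W0, hW0, W0.zero_mem⟩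
        smul_mem' := by
          rintro a v ⟨W, hW, hv⟩
          exact ⟨W, hW, W.smul_mem a hv⟩
        add_mem' := by
          rintro x y ⟨W, hW, hx⟩ hy
          by_cases hyW : y ∈ W
          · exact ⟨W, hW, W.add_mem hx hyW⟩
          · have h1 : x + y ∉ W := fun h => hyW (by simpa using W.sub_mem h hx)
            have h2 := D1 W hW y (x+y) hyW (Submodule.add_mem_sup hx (Submodule.mem_span_singleton_self y)) h1
            rw [Set.mem_ofPred_eq, ← hpos] at hy ⊢
            rw [h2]; exact hy }
    have hX : ∀ v, v ∈ X ↔ ∃ W ∈ L, v ∈ W := fun v => Iff.rfl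
    have hdX : ∀ v ∈ X, v ≠ 0 → d v = η := by
      rintro v ⟨W, hW, hv⟩ hv0
      exact hHη W hW v hv hv0
    have hdX' : ∀ v, v ∉ X → d v = 0 := by
      intro v hv
      have h1 : ¬ 0 < d v := fun h => hv ((hpos v).1 h)
      have h2 : 0 ≤ d v := by rw [hd]; positivity
      linarith
    have hLX : ∀ W : Submodule F V, Module.finrank F W = m → (W ∈ L ↔ W ≤ X) := by
      intro W hW
      refine ⟨fun h v hv => ⟨W, h, hv⟩, fun h => ?_⟩
      by_contra hWL
      have h1 := sg_const' (h := d) (W := W) η (fun v hv hv0 => hdX v (h hv) hv0)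
      rw [hs0 W hW hWL, hW, ← hq, hηm] at h1
      linarith
    have hηpos : 0 < η := by
      obtain ⟨v, hv, hv0⟩ := Submodule.exists_mem_ne_zero_of_ne_bot 
          (show W0 ≠ ⊥ by rintro rfl; have := hLG _ hW0; simp at this; omega)
      rw [← hHη W0 hW0 v hv hv0, hpos]
      exact ⟨W0, hW0, hv⟩
    have hW0X : W0 ≤ X := (hLX W0 (hLG W0 hW0)).1 hW0
    have hXtop : ∃ p, p ∉ X := by
      by_contra hcon
      push Not at hcon
      obtain ⟨U, hU, hUL, -⟩ := hdis W0 hW0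
      exact hUL ((hLX U hU).2 (fun v _ => hcon v))
    obtain ⟨p, hp⟩ := hXtop
    have hfrp := finrank_sup_span hp
    -- sums for spaces `A ⊔ B` with `A ≤ X`
    have hsum : ∀ A W : Submodule F V, A ≤ W → A ≤ X → (∀ v ∈ W, v ∉ A → v ∉ X) → 
        sg d W = ((q:ℝ)^(Module.finrank F A) - 1) * η := by
      intro A W hAW hAX h
      rw [sg_const hAW 0 (fun v hv hvA => hdX' v (h v hv hvA)), 
        sg_const' η (fun v hv hv0 => hdX v (hAX hv) hv0)]
      ring
    have hstep : ∀ (A W : Submodule F V) (p : V), A ≤ W → (∀ v ∈ W, v ∉ A → v ∉ X) → 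
        p ∉ X ⊔ W → (∀ v ∈ W ⊔ Submodule.span F {p}, v ∉ A → v ∉ X) := by
      intro A W p hAW h hp v hv hvA hvX
      obtain ⟨w, hw, y, hy, rfl⟩ := Submodule.mem_sup.1 hv
      obtain ⟨a, rfl⟩ := Submodule.mem_span_singleton.1 hy
      by_cases ha : a = 0
      · subst ha
        simp only [zero_smul, add_zero] at hvA hvX
        exact h w hw hvA hvX
      · apply hp
        have h1 : a • p ∈ X ⊔ W := by
          have := Submodule.sub_mem _ (Submodule.mem_sup_left (T := W) hvX) (Submodule.mem_sup_right (S := X) hw)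
          simpa using this
        exact (Submodule.smul_mem_iff _ ha).1 h1
    have hXp : X ⊔ Submodule.span F {p} = ⊤ := by
      by_contra hne
      obtain ⟨p', hp'⟩ : ∃ p', p' ∉ X ⊔ Submodule.span F {p} := by
        by_contra hcon
        push Not at hcon
        exact hne (eq_top_iff.2 fun v _ => hcon v)
      obtain ⟨A, -, hA, hAm⟩ := ex_mid (F := F) (V := V) (T := ⊥) (S := W0) bot_le (m-1) 
        (by rw [hLG W0 hW0]; simp)
      obtain ⟨B, -, hB, hBm⟩ := ex_mid (F := F) (V := V) (T := ⊥) (S := W0) bot_le (m-2) 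
        (by rw [hLG W0 hW0]; simp)
      simp only [finrank_bot, zero_add] at hAm hBm
      have hAX := hA.trans hW0X
      have hBX := hB.trans hW0X
      have hpA : p ∉ A := fun h => hp (hAX h)
      have hpB : p ∉ B := fun h => hp (hBX h)
      have a1 := hstep A A p le_rfl (fun v hv hv' => absurd hv hv') (by rwa [sup_eq_left.2 hAX])
      have b1 := hstep B B p le_rfl (fun v hv hv' => absurd hv hv') (by rwa [sup_eq_left.2 hBX])
      have hpX' : p' ∉ X ⊔ (B ⊔ Submodule.span F {p}) := by
        rwa [← sup_assoc, sup_eq_left.2 hBX]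
      have b2 := hstep B (B ⊔ Submodule.span F {p}) p' le_sup_left b1 hpX'
      have a3 := hsum A _ le_sup_left hAX a1
      have b3 := hsum B _ (le_sup_left.trans le_sup_left) hBX b2
      have hp'B : p' ∉ B ⊔ Submodule.span F {p} := fun h => hpX' (Submodule.mem_sup_right h)
      rw [hs0 _ (by rw [finrank_sup_span hpA]; omega) (by
        intro h
        have := (hLX _ (hLG _ h)).1 h
        exact hp (this (Submodule.mem_sup_right (Submodule.mem_span_singleton_self p)))), hAm] at a3
      rw [hs0 _ (by rw [finrank_sup_span hp'B, finrank_sup_span hpB]; omega) (by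
        intro h
        have := (hLX _ (hLG _ h)).1 h
        exact hp (this (Submodule.mem_sup_left (Submodule.mem_sup_right (Submodule.mem_span_singleton_self p))))), 
        hBm, a3] at b3
      have := mul_right_cancel₀ hηpos.ne' b3
      have h4 := pow_lt_pow_right₀ q1 (show m - 2 < m - 1 by omega)
      linarith
    rw [hXp, finrank_top] at hfrp
    refine ⟨?_, X, hfrp.symm, hLX⟩
    by_contra he
    obtain ⟨C, hC⟩ := Submodule.exists_isCompl W0
    have hWC : Module.finrank F (C ⊓ X : Submodule F V) ≥ m := by
      have h1 := Submodule.finrank_sup_add_finrank_inf_eq C X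
      have h2 := Submodule.finrank_add_eq_of_isCompl hC
      have h3 := Submodule.finrank_le (C ⊔ X)
      have h4 := hLG W0 hW0
      omega
    obtain ⟨R, -, hR, hRm⟩ := ex_mid (F := F) (V := V) (T := ⊥) (S := C ⊓ X) bot_le m (by simpa using hWC)
    simp only [finrank_bot, zero_add] at hRm
    have hRL := (hLX R hRm).2 (hR.trans inf_le_right)
    apply hint W0 hW0 R hRL
    rw [← disjoint_iff]
    exact hC.disjoint.mono_right (hR.trans inf_le_left)

end CL

/-- A Cameron-Liebler set of $k$-spaces with parameter $x = 1$ is pairwise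
intersecting, and is either a point-pencil, or $n = 2k+1$ and it is the set of all
$k$-subspaces in a fixed hyperplane. -/
theorem stmt19 (q n k : ℕ) (F : Type) [Field F] [Fintype F]
    (hq : Fintype.card F = q) (hn : 2*k + 1 ≤ n)
    [Fintype {W : Submodule F (Fin (n+1) → F) // Module.finrank F W = k + 1}]
    (L : Finset {W : Submodule F (Fin (n+1) → F) // Module.finrank F W = k + 1})
    (hL : IsCameronLiebler q n k F L 1) :
    (∀ W ∈ L, ∀ W' ∈ L, W.1 ⊓ W'.1 ≠ ⊥) ∧
    ((∃ P : Submodule F (Fin (n+1) → F), Module.finrank F P = 1 ∧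
        L = Finset.univ.filter fun W => P ≤ W.1) ∨
     (n = 2*k + 1 ∧ ∃ H : Submodule F (Fin (n+1) → F), Module.finrank F H = n ∧
        L = Finset.univ.filter fun W => W.1 ≤ H)) := by
  have hkn : Module.finrank F (Fin (n+1) → F) = (k+1) + (k+1) + (n - 2*k - 1) := by
    rw [Module.finrank_fin_fun]; omega
  set e := n - 2*k - 1 with he
  subst hq
  have q1 : (1:ℝ) < Fintype.card F := q_gt
  have q0 : 0 < Fintype.card F := Fintype.card_pos
  obtain ⟨-, hcl⟩ := hL
  have hc : ((gbinom (Fintype.card F) (n - k - 1) k : ℝ) * (Fintype.card F : ℝ)^(k^2 + k)) 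
      = (acnt (Fintype.card F) (k+1) e (k+1) 1 : ℝ) := by
    unfold acnt
    rw [if_pos (by omega), Nat.add_sub_cancel, show e + k = n - k - 1 by omega]
    push_cast
    rw [show (k+1)*k = k^2 + k by ring, mul_comm]
  rw [hc] at hcl
  have hcpos : (0:ℝ) < (acnt (Fintype.card F) (k+1) e (k+1) 1 : ℝ) := by
    exact_mod_cast acnt_pos (Fintype.card F) (k+1) e (k+1) 1 q0 (by omega)
  have hint : ∀ W ∈ L, ∀ W' ∈ L, W.1 ⊓ W'.1 ≠ ⊥ := by
    intro W hW W' hW' h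
    have h1 := hcl W'
    rw [if_pos hW', sub_self, zero_mul, Nat.cast_eq_zero, Finset.card_eq_zero, 
      Finset.filter_eq_empty_iff] at h1
    exact h1 hW h
  have hmax : ∀ W, W ∉ L → ∃ U ∈ L, U.1 ⊓ W.1 = ⊥ := by
    intro W hW
    have h1 := hcl W
    rw [if_neg hW, sub_zero, one_mul] at h1
    rw [← h1, Nat.cast_pos, Finset.card_pos] at hcpos
    obtain ⟨U, hU⟩ := hcpos
    simp only [mem_filter] at hU
    exact ⟨U, hU⟩
  refine ⟨hint, ?_⟩
  rcases Nat.eq_zero_or_pos k with hk | hk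
  · left
    subst hk
    obtain ⟨W0, hW0⟩ : ∃ W, W ∈ L := by
      obtain ⟨R, -, -, hR⟩ := ex_mid (F := F) (V := Fin (n+1) → F) (T := ⊥) (S := ⊤) bot_le 1 (by simp)
      simp only [finrank_bot, zero_add] at hR
      by_contra hne
      push Not at hne
      obtain ⟨U, hU, -⟩ := hmax ⟨R, by rw [hR]⟩ (hne _)
      exact hne U hU
    refine ⟨W0.1, W0.2, ?_⟩
    ext W
    simp only [mem_filter, mem_univ, true_and]
    constructor
    · intro hW
      have h1 := hint W0 hW0 W hW
      have h2 : W0.1 ⊓ W.1 = W0.1 := by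
        apply Submodule.eq_of_le_of_finrank_le inf_le_left
        rw [W0.2]
        have : Module.finrank F (W0.1 ⊓ W.1 : Submodule F (Fin (n+1) → F)) ≠ 0 := 
          fun h => h1 (Submodule.finrank_eq_zero.1 h)
        omega
      exact inf_eq_left.1 h2
    · intro hW
      have : W0 = W := Subtype.ext (Submodule.eq_of_le_of_finrank_eq hW (by rw [W0.2, W.2]))
      rwa [← this]
  set L' : Finset (Submodule F (Fin (n+1) → F)) := L.map (Function.Embedding.subtype _) with hL'
  have hmem : ∀ W : {W : Submodule F (Fin (n+1) → F) // Module.finrank F W = k + 1}, W.1 ∈ L' ↔ W ∈ L := by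
    intro W; simp [hL', W.2]
  have hLG : ∀ W ∈ L', Module.finrank F W = k + 1 := by
    intro W hW
    simp only [hL', mem_map, Function.Embedding.coe_subtype] at hW
    obtain ⟨U, -, rfl⟩ := hW
    exact U.2
  have hfil : ∀ (P : Submodule F (Fin (n+1) → F) → Prop) [DecidablePred P],
      ∑ U ∈ Gr F (Fin (n+1) → F) (k+1) with P U, (if U ∈ L' then (1:ℝ) else 0) = (#{U ∈ L' | P U} : ℝ) := by
    intro P _
    rw [← Finset.sum_filter, Finset.sum_const, nsmul_eq_mul, mul_one]
    congr 2
    ext U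
    simp only [mem_filter, mem_Gr]
    have := hLG U
    tauto
  obtain ⟨t, u, ht, hf⟩ := deg1 (F := F) (V := Fin (n+1) → F) (k+1) e (by omega) hkn 
    (fun U => if U ∈ L' then (1:ℝ) else 0) (fun v => (#{U ∈ L' | v ∈ U} : ℝ)) 
    (fun v => (hfil _).symm) (by
      intro W hW
      rw [mem_Gr] at hW
      rw [hfil (fun U => U ⊓ W = ⊥)]
      have h1 := hcl ⟨W, hW⟩
      have h2 : (if W ∈ L' then (1:ℝ) else 0) = if (⟨W, hW⟩ : {W : Submodule F (Fin (n+1) → F) // Module.finrank F W = k + 1}) ∈ L then 1 else 0 :=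
        if_congr (hmem ⟨W, hW⟩) rfl rfl
      rw [h2, mul_comm, ← h1]
      rw [hL', Finset.filter_map, Finset.card_map]
      rfl)
  have hres := struct_aux (F := F) (V := Fin (n+1) → F) (k+1) e (by omega) hkn L' hLG (by
      intro W hW W' hW'
      have h1 := hLG W hW
      have h2 := hLG W' hW'
      exact hint ⟨W, h1⟩ ((hmem ⟨W, h1⟩).1 hW) ⟨W', h2⟩ ((hmem ⟨W', h2⟩).1 hW')) (by
      intro W hW hWL
      obtain ⟨U, hU, hUW⟩ := hmax ⟨W, hW⟩ (fun h => hWL ((hmem ⟨W, hW⟩).2 h))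
      exact ⟨U.1, (hmem U).2 hU, hUW⟩) (fun v => (#{U ∈ L' | v ∈ U} : ℝ)) (fun v => rfl)
      (-u/t) ((1-u)/t) (by apply div_lt_div_of_pos_right _ ht; linarith) (by
      intro W hW
      have h1 := hf W (mem_Gr.2 (hLG W hW))
      simp only [if_pos hW] at h1
      rw [eq_div_iff ht.ne']
      linarith) (by
      intro W hWm hW
      have h1 := hf W (mem_Gr.2 hWm)
      simp only [if_neg hW] at h1
      rw [eq_div_iff ht.ne']
      linarith)
  rcases hres with ⟨P, hP, hPL⟩ | ⟨he0, H, hH, hHL⟩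
  · left
    refine ⟨P, hP, ?_⟩
    ext W
    rw [← hmem, hPL W.1 W.2]
    simp
  · right
    refine ⟨by omega, H, by rw [Module.finrank_fin_fun] at hH; omega, ?_⟩
    ext W
    rw [← hmem, hHL W.1 W.2]
    simp
end
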